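/- Let Λ be a finite-dimensional basic algebra and M := mod Λ. Let Δ = (X₁,…,X_m) be a cogen-preordered basic τ⁻¹-rigid module in M. For 1 ≤ j ≤ m set F_j := Cogen Δ_{≥j} and G_j := (τ⁻¹Δ_{≥j})^⊥. Then ([F₁,G₁], …, [F_m,G_m]) is a decreasing sequence of functorially finite maximal join intervals in torf M. -/

import Mathlib

/- Framework: the category `mod Λ` of finitely generated modules over a
finite-dimensional algebra `Λ`, modeled concretely via `ModuleCat Λ` together
with the finiteness predicate `Module.Finite`.  Subcategories are sets of
(bundled) modules.  `τ⁻¹`-rigidity and `(τ⁻¹X)^⊥` are encoded via the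
Auslander–Smalø characterizations
`Hom(τ⁻¹X, M) = 0 ↔ Ext¹(M', X) = 0 for all M' ∈ Cogen M`. -/

open Function

noncomputable section

namespace Paper

variable (Λ : Type) [Ring Λ]

abbrev Mdl := ModuleCat.{0} Λ

/-- The class of all finitely generated `Λ`-modules, i.e. `mod Λ` itself. -/
def modAll : Set (Mdl Λ) := {M | Module.Finite Λ ↥M}

/-- Isomorphism of modules. -/
def IsoM (M N : Mdl Λ) : Prop := Nonempty (↥M ≃ₗ[Λ] ↥N)

/-- Direct sum of two modules. -/
def dsum (M N : Mdl Λ) : Mdl Λ := ModuleCat.of Λ (↥M × ↥N)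

/-- `M` is a direct summand of `N`. -/
def IsSummand (M N : Mdl Λ) : Prop :=
  ∃ (i : ↥M →ₗ[Λ] ↥N) (p : ↥N →ₗ[Λ] ↥M), p.comp i = LinearMap.id

/-- The additive closure `add X`: direct summands of finite direct sums of copies of `X`. -/
def addOf (X : Mdl Λ) : Set (Mdl Λ) :=
  {M | ∃ n : ℕ, IsSummand Λ M (ModuleCat.of Λ (Fin n → ↥X))}

/-- `M` is a zero object. -/
def IsZeroM (M : Mdl Λ) : Prop := Subsingleton ↥M

/-- `M` is indecomposable (and nonzero). -/
def Indec (M : Mdl Λ) : Prop :=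
  ¬ IsZeroM Λ M ∧ ∀ A B : Mdl Λ, IsoM Λ M (dsum Λ A B) → IsZeroM Λ A ∨ IsZeroM Λ B

/-- `X` is basic: no nonzero module `N` with `N ⊕ N` a direct summand of `X`. -/
def IsBasic (X : Mdl Λ) : Prop :=
  ∀ N : Mdl Λ, ¬ IsZeroM Λ N → ¬ IsSummand Λ (dsum Λ N N) X

/-- `W` is (up to isomorphism) the module `Z/D` obtained from `Z` by deleting all
direct summands lying in `D`. -/
def IsDeleted (Z : Mdl Λ) (D : Set (Mdl Λ)) (W : Mdl Λ) : Prop :=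
  ∃ Z' : Mdl Λ, IsoM Λ Z (dsum Λ W Z') ∧
    (∀ V, Indec Λ V → IsSummand Λ V Z' → V ∈ D) ∧
    (∀ V, Indec Λ V → IsSummand Λ V W → V ∉ D)

/-- `Cogen 𝒞` for a class of modules `𝒞`. -/
def CogenS (C : Set (Mdl Λ)) : Set (Mdl Λ) :=
  {M | Module.Finite Λ ↥M ∧ ∃ Y ∈ C, ∃ f : ↥M →ₗ[Λ] ↥Y, Injective f}

/-- `Cogen X` for a module `X`. -/
def Cogen (X : Mdl Λ) : Set (Mdl Λ) := CogenS Λ (addOf Λ X)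

/-- `𝒞^⊥ = {M | Hom(𝒞, M) = 0}`. -/
def perpR (C : Set (Mdl Λ)) : Set (Mdl Λ) :=
  {M | Module.Finite Λ ↥M ∧ ∀ X ∈ C, ∀ f : ↥X →ₗ[Λ] ↥M, f = 0}

/-- `⊥𝒞 = {M | Hom(M, 𝒞) = 0}`. -/
def perpL (C : Set (Mdl Λ)) : Set (Mdl Λ) :=
  {M | Module.Finite Λ ↥M ∧ ∀ X ∈ C, ∀ f : ↥M →ₗ[Λ] ↥X, f = 0}

/-- `0 → A → E → B → 0` is a short exact sequence. -/
def IsSESeq {A E B : Mdl Λ} (f : ↥A →ₗ[Λ] ↥E) (g : ↥E →ₗ[Λ] ↥B) : Prop :=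
  Injective f ∧ Surjective g ∧ LinearMap.range f = LinearMap.ker g

/-- `Ext¹(A, B) = 0`: every short exact sequence `0 → B → E → A → 0` splits. -/
def Ext1Zero (A B : Mdl Λ) : Prop :=
  ∀ (E : Mdl Λ) (f : ↥B →ₗ[Λ] ↥E) (g : ↥E →ₗ[Λ] ↥A),
    IsSESeq Λ f g → ∃ s : ↥A →ₗ[Λ] ↥E, g.comp s = LinearMap.id

/-- `X` is `τ⁻¹`-rigid, i.e. `Hom(τ⁻¹X, X) = 0`; encoded via the Auslander–Smalø
characterization: `Ext¹(Y, X) = 0` for every `Y ∈ Cogen X`. -/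
def TauInvRigid (X : Mdl Λ) : Prop :=
  Module.Finite Λ ↥X ∧ ∀ Y ∈ Cogen Λ X, Ext1Zero Λ Y X

/-- The torsion-free class `(τ⁻¹X)^⊥`; encoded via Auslander–Smalø:
`Hom(τ⁻¹X, M) = 0` iff `Ext¹(N, X) = 0` for all `N ∈ Cogen M`. -/
def perpTauInv (X : Mdl Λ) : Set (Mdl Λ) :=
  {M | Module.Finite Λ ↥M ∧ ∀ N ∈ Cogen Λ M, Ext1Zero Λ N X}

/-- The zero subcategory `0`. -/
def zeroSubcat : Set (Mdl Λ) := {M | IsZeroM Λ M}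

/-- `C` is a torsion-free class of the abelian (wide, extension-closed)
subcategory `W`: contained in `W`, contains `0`, closed under extensions (taken
in `W`) and under submodules lying in `W`. -/
def IsTorfIn (W C : Set (Mdl Λ)) : Prop :=
  C ⊆ W ∧ (∃ Z ∈ C, IsZeroM Λ Z) ∧
  (∀ (A E B : Mdl Λ) (f : ↥A →ₗ[Λ] ↥E) (g : ↥E →ₗ[Λ] ↥B),
      IsSESeq Λ f g → A ∈ C → B ∈ C → E ∈ W → E ∈ C) ∧
  (∀ M N : Mdl Λ, M ∈ W → N ∈ C → (∃ f : ↥M →ₗ[Λ] ↥N, Injective f) → M ∈ C)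

/-- `C` is a torsion-free class of `mod Λ`. -/
def IsTorf (C : Set (Mdl Λ)) : Prop := IsTorfIn Λ (modAll Λ) C

/-- `C` is a torsion class of the abelian (wide) subcategory `W`. -/
def IsTorsIn (W C : Set (Mdl Λ)) : Prop :=
  C ⊆ W ∧ (∃ Z ∈ C, IsZeroM Λ Z) ∧
  (∀ (A E B : Mdl Λ) (f : ↥A →ₗ[Λ] ↥E) (g : ↥E →ₗ[Λ] ↥B),
      IsSESeq Λ f g → A ∈ C → B ∈ C → E ∈ W → E ∈ C) ∧
  (∀ M N : Mdl Λ, M ∈ C → N ∈ W → (∃ g : ↥M →ₗ[Λ] ↥N, Surjective g) → N ∈ C)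

/-- Contravariant finiteness of `C` in `B`: every object of `B` admits a left
`C`-approximation. -/
def ContraFinIn (C B : Set (Mdl Λ)) : Prop :=
  ∀ X ∈ B, ∃ X' ∈ C, ∃ h : ↥X →ₗ[Λ] ↥X',
    ∀ C' ∈ C, ∀ f : ↥X →ₗ[Λ] ↥C', ∃ g : ↥X' →ₗ[Λ] ↥C', g.comp h = f

/-- Covariant finiteness of `C` in `B`: every object of `B` admits a right
`C`-approximation. -/
def CovFinIn (C B : Set (Mdl Λ)) : Prop :=
  ∀ X ∈ B, ∃ X' ∈ C, ∃ h : ↥X' →ₗ[Λ] ↥X,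
    ∀ C' ∈ C, ∀ f : ↥C' →ₗ[Λ] ↥X, ∃ g : ↥C' →ₗ[Λ] ↥X', h.comp g = f

def FunctFinIn (C B : Set (Mdl Λ)) : Prop := ContraFinIn Λ C B ∧ CovFinIn Λ C B

def ContraFin (C : Set (Mdl Λ)) : Prop := ContraFinIn Λ C (modAll Λ)
def CovFin (C : Set (Mdl Λ)) : Prop := CovFinIn Λ C (modAll Λ)
def FunctFin (C : Set (Mdl Λ)) : Prop := ContraFin Λ C ∧ CovFin Λ C

/-- `F'` covers `F` in the lattice of torsion-free classes of `W`. -/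
def CoversIn (W F' F : Set (Mdl Λ)) : Prop :=
  IsTorfIn Λ W F ∧ IsTorfIn Λ W F' ∧ F ⊂ F' ∧
    ∀ G, IsTorfIn Λ W G → F ⊂ G → G ⊆ F' → G = F'

/-- `pop^G(F)` computed in `torf W`: the join of `F` together with all covers of
`F` contained in `G`, realized as the intersection of all torsion-free classes
of `W` containing them. -/
def popIn (W G F : Set (Mdl Λ)) : Set (Mdl Λ) :=
  ⋂₀ {H | IsTorfIn Λ W H ∧ F ⊆ H ∧ ∀ F', CoversIn Λ W F' F → F' ⊆ G → F' ⊆ H}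

/-- `[Jlo, Jhi]` is a maximal join interval in the interval `[Ilo, Ihi]` of the
lattice of torsion-free classes of `W`. -/
def IsMaxJoinIn (W Jlo Jhi Ilo Ihi : Set (Mdl Λ)) : Prop :=
  IsTorfIn Λ W Jlo ∧ IsTorfIn Λ W Jhi ∧ Ilo ⊆ Jlo ∧ Jlo ⊆ Jhi ∧ Jhi ⊆ Ihi ∧
    Jhi = popIn Λ W Ihi Jlo

/-- The direct sum `⊕_{a ≤ j ≤ b} X j`. -/
def seqSum (X : ℕ → Mdl Λ) (a b : ℕ) : Mdl Λ :=
  ModuleCat.of Λ ((j : Finset.Icc a b) → ↥(X j.1))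

/-- `(X 1, …, X m)` is a cogen-preordered (basic) `τ⁻¹`-rigid module of length `m`. -/
def CogenPreordered (m : ℕ) (X : ℕ → Mdl Λ) : Prop :=
  IsBasic Λ (seqSum Λ X 1 m) ∧ TauInvRigid Λ (seqSum Λ X 1 m) ∧
  ∀ k, 1 ≤ k → k ≤ m → ∀ Y, Indec Λ Y → IsSummand Λ Y (X k) →
    ∀ W, IsDeleted Λ (seqSum Λ X k m) (addOf Λ Y) W → Y ∉ Cogen Λ W

/-- `X` is cogen-minimal. -/
def CogenMinimal (X : Mdl Λ) : Prop :=
  ∀ Y, Indec Λ Y → IsSummand Λ Y X →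
    ∀ W, IsDeleted Λ X (addOf Λ Y) W → Y ∉ Cogen Λ W

/-- `X` is a split injective object of `C`. -/
def SplitInjIn (C : Set (Mdl Λ)) (X : Mdl Λ) : Prop :=
  X ∈ C ∧ ∀ Y ∈ C, ∀ f : ↥X →ₗ[Λ] ↥Y, Injective f →
    ∃ r : ↥Y →ₗ[Λ] ↥X, r.comp f = LinearMap.id

/-- `I` is the basic module `I_s(C)` whose additive closure consists of the
split injective objects of `C`. -/
def IsMinSplitInj (C : Set (Mdl Λ)) (I : Mdl Λ) : Prop :=
  IsBasic Λ I ∧ addOf Λ I = {X | SplitInjIn Λ C X}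

/-- `C` is an ICE-closed subcategory of `mod Λ`. -/
def IsICE (C : Set (Mdl Λ)) : Prop :=
  (∀ M ∈ C, Module.Finite Λ ↥M) ∧
  (∀ M N, IsoM Λ M N → M ∈ C → N ∈ C) ∧
  (∃ Z ∈ C, IsZeroM Λ Z) ∧
  (∀ (A E B : Mdl Λ) (f : ↥A →ₗ[Λ] ↥E) (g : ↥E →ₗ[Λ] ↥B),
      IsSESeq Λ f g → A ∈ C → B ∈ C → Module.Finite Λ ↥E → E ∈ C) ∧
  (∀ M N : Mdl Λ, M ∈ C → N ∈ C → ∀ f : ↥M →ₗ[Λ] ↥N,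
      ModuleCat.of Λ ↥(LinearMap.range f) ∈ C ∧
      ModuleCat.of Λ (↥N ⧸ LinearMap.range f) ∈ C)

/-- `W_L(C)`. -/
def WL (C : Set (Mdl Λ)) : Set (Mdl Λ) :=
  {X | X ∈ C ∧ ∀ Y ∈ C, ∀ f : ↥Y →ₗ[Λ] ↥X, ModuleCat.of Λ ↥(LinearMap.ker f) ∈ C}

/-- An ICE-sequence. -/
def IsICESeq (C : ℤ → Set (Mdl Λ)) : Prop :=
  ∀ k : ℤ, IsICE Λ (C k) ∧ IsTorsIn Λ (WL Λ (C k)) (C (k + 1))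

/-- The ICE-sequence `C` has length `m`. -/
def ICESeqLen (C : ℤ → Set (Mdl Λ)) (m : ℕ) : Prop :=
  C 1 = zeroSubcat Λ ∧ C (-(m : ℤ)) = modAll Λ

/-- The heart `G ∩ ⊥F` of an interval `[F, G]` of torsion-free classes. -/
def heart (F G : Set (Mdl Λ)) : Set (Mdl Λ) := G ∩ perpL Λ F

/-- The `τ⁻¹`-perpendicular category `J^d(X) = (τ⁻¹X)^⊥ ∩ ⊥X`. -/
def Jd (X : Mdl Λ) : Set (Mdl Λ) := perpTauInv Λ X ∩ perpL Λ (addOf Λ X)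

/-- `B * C`: objects which are extensions of an object of `C` by an object of `B`. -/
def starProd (B C : Set (Mdl Λ)) : Set (Mdl Λ) :=
  {E | ∃ Mb Mc : Mdl Λ, Mb ∈ B ∧ Mc ∈ C ∧
    ∃ (f : ↥Mb →ₗ[Λ] ↥E) (g : ↥E →ₗ[Λ] ↥Mc), IsSESeq Λ f g}

/-- The torsion submodule `t_X M`: the largest submodule of `M` lying in `⊥X`. -/
def tSub (X M : Mdl Λ) : Submodule Λ ↥M :=
  sSup {N : Submodule Λ ↥M | ∀ f : ↥N →ₗ[Λ] ↥X, f = 0}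

/-- The torsion functor value `t_X M`. -/
def tMod (X M : Mdl Λ) : Mdl Λ := ModuleCat.of Λ ↥(tSub Λ X M)

/-- `X` is a `τ⁻¹`-rigid object of the wide subcategory `W` (with respect to the
inverse AR translate of `W`); encoded via Auslander–Smalø in `W`, using
`Cogen_W X = Cogen X ∩ W` and `Ext¹_W = Ext¹`. -/
def TauInvRigidIn (W : Set (Mdl Λ)) (X : Mdl Λ) : Prop :=
  X ∈ W ∧ ∀ Y ∈ Cogen Λ X ∩ W, Ext1Zero Λ Y X

/-- `X` is cogen-minimal as an object of the wide subcategory `W`. -/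
def CogenMinimalIn (W : Set (Mdl Λ)) (X : Mdl Λ) : Prop :=
  ∀ Y, Indec Λ Y → IsSummand Λ Y X →
    ∀ Wd, IsDeleted Λ X (addOf Λ Y) Wd → Y ∉ Cogen Λ Wd ∩ W

end Paper

/-!
Throughout, `Z = Δ_{≥ k}`, `Z' = Δ_{> k}`, `F = Cogen Z`, `G = (τ⁻¹Z)^⊥` and `G' = (τ⁻¹Z')^⊥`.

The bridge to linear algebra is an injective copresentation `0 → Y → I₀ → I₁` with essential image
in `I₁`: `M` lies in `(τ⁻¹Y)^⊥` iff every map `M → I₁` lifts to `I₀` (`mem_perp`). This makes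
`(τ⁻¹Y)^⊥` a torsion-free class, and a universal extension `0 → Y^r → U → M` with `U ∈ (τ⁻¹Y)^⊥`
(`univ_ext`) gives right approximations. Left approximations by a torsion-free class are torsion-free
quotients, and those of `Cogen Z` on the right come from finiteness of `Hom`-spaces, so all the
classes are functorially finite. Rigidity gives `F ⊆ G ⊆ G'`; it remains to see that `G` is the join
of `F` and the covers of `F` inside `G'`.

* `G` is contained in that join (`perp_le_of_covers`). The heart `G ∩ ⊥F` is closed under kernels in
  `mod Λ`, and under quotients by its objects. A simple object `M` of it generates together with `F`
  a cover of `F` inside `G` (`covers_of_simple`), and an object of `G` outside the join leads, by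
  taking torsion parts and a minimal length, to a simple object of the heart outside the join.

* `G` contains every cover `F'` of `F` with `F' ⊆ G'`. Let `Y` be an indecomposable summand of `X k`.
  Since `Y` is not cogenerated by the complement of the `Y`-summands in `Z`, it is split injective in
  `F` (`splitInj_of_not_cogen`): an embedding `Y → M` in `F` without retraction would send some
  nonzero `x` in the socle of `Y` over its local endomorphism ring to an element killed by all maps
  `M → Z`. If `F'` were not contained in `(τ⁻¹Y)^⊥`, then `F = F' ∩ (τ⁻¹Y)^⊥`; for `M ∈ F'` outside
  `F` of minimal length, the universal extension `0 → Y^r → U → M → 0` has `U ∈ F`, and splits as `Y`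
  is split injective, so `M ∈ F`, a contradiction (`covers_le_perp`). Hence `Ext¹(N, Y) = 0` for all
  `N ∈ F'` and all such `Y`, so `Ext¹(N, X k) = 0`; as `F' ⊆ G'` also `Ext¹(N, Z') = 0`, and `F' ⊆ G`.
-/

namespace StmtAux

open Paper

variable {Λ : Type} [Ring Λ]

/-! ### Injective modules over a finite-dimensional algebra -/

section Injectives

/-- The coinduced `Λ`-module `Hom_K(Λ, V)`, with `(a • φ) x = φ (x * a)`. -/
def Coind (K Λ V : Type) [Field K] [Ring Λ] [Algebra K Λ] [AddCommGroup V] [Module K V] : Type :=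
  Λ →ₗ[K] V

variable (K V : Type) [Field K] [Algebra K Λ] [AddCommGroup V] [Module K V]

instance : AddCommGroup (Coind K Λ V) := inferInstanceAs (AddCommGroup (Λ →ₗ[K] V))

instance : Module K (Coind K Λ V) := inferInstanceAs (Module K (Λ →ₗ[K] V))

instance : Module Λ (Coind K Λ V) where
  smul a φ := LinearMap.comp (show Λ →ₗ[K] V from φ) (LinearMap.mulRight K a)
  one_smul φ := LinearMap.ext fun x => congrArg (show Λ →ₗ[K] V from φ) (mul_one x)
  mul_smul a b φ := LinearMap.ext fun x =>
    congrArg (show Λ →ₗ[K] V from φ) (mul_assoc x a b).symm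
  smul_zero _ := rfl
  smul_add _ _ _ := rfl
  add_smul a b φ := LinearMap.ext fun x =>
    (congrArg (show Λ →ₗ[K] V from φ) (mul_add x a b)).trans (map_add _ _ _)
  zero_smul φ := LinearMap.ext fun x =>
    (congrArg (show Λ →ₗ[K] V from φ) (mul_zero x)).trans (map_zero _)

instance : IsScalarTower K Λ (Coind K Λ V) where
  smul_assoc c a φ := LinearMap.ext fun x =>
    (congrArg (show Λ →ₗ[K] V from φ) (mul_smul_comm c x a)).trans (map_smul _ _ _)

lemma coind_finite [FiniteDimensional K Λ] [FiniteDimensional K V] :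
    Module.Finite Λ (Coind K Λ V) :=
  have : Module.Finite K (Coind K Λ V) := inferInstanceAs (Module.Finite K (Λ →ₗ[K] V))
  Module.Finite.of_restrictScalars_finite K Λ _

/-- Coinduction from a field produces injectives: a `Λ`-map to `Hom_K(Λ, V)` is the same thing as
a `K`-linear map to `V`, and these extend along injections. -/
lemma coind_injective : Module.Injective Λ (Coind K Λ V) where
  out A B _ _ _ _ u hu f := by
    let : Module K A := Module.compHom A (algebraMap K Λ)
    let : Module K B := Module.compHom B (algebraMap K Λ)
    have : IsScalarTower K Λ A := ⟨fun c a x => by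
      rw [Algebra.smul_def, mul_smul]; rfl⟩
    have : IsScalarTower K Λ B := ⟨fun c a x => by
      rw [Algebra.smul_def, mul_smul]; rfl⟩
    let e0 : A →ₗ[K] V :=
      { toFun := fun x => (show Λ →ₗ[K] V from f x) 1
        map_add' := fun x y => by rw [map_add]; rfl
        map_smul' := fun c x => by
          rw [← algebraMap_smul Λ c x, map_smul, algebraMap_smul]; rfl }
    obtain ⟨r, hr⟩ := (u.restrictScalars K).exists_leftInverse_of_injective
      (LinearMap.ker_eq_bot.2 hu)
    let e : B →ₗ[K] V := e0 ∘ₗ r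
    let h : B →ₗ[Λ] Coind K Λ V :=
      { toFun := fun y => (show Λ →ₗ[K] V from
          { toFun := fun a => e (a • y)
            map_add' := fun a b => by rw [add_smul, map_add]
            map_smul' := fun c a => by rw [smul_assoc, map_smul]; rfl })
        map_add' := fun y z => LinearMap.ext fun a => by
          change e (a • (y + z)) = e (a • y) + e (a • z)
          rw [smul_add, map_add]
        map_smul' := fun b y => LinearMap.ext fun a => by
          change e (a • b • y) = e ((a * b) • y)
          rw [mul_smul] }
    refine ⟨h, fun x => LinearMap.ext fun a => ?_⟩
    change e0 (r (a • u x)) = (show Λ →ₗ[K] V from f x) a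
    have h1 : r (a • u x) = a • x := by
      rw [← map_smul]; exact LinearMap.congr_fun hr (a • x)
    rw [h1]
    change (show Λ →ₗ[K] V from f (a • x)) 1 = _
    rw [map_smul]
    exact congrArg (show Λ →ₗ[K] V from f x) (one_mul a)

/-- `mod Λ` has enough injectives. -/
lemma exists_embedding [FiniteDimensional K Λ] (M : Type) [AddCommGroup M] [Module Λ M]
    [Module.Finite Λ M] :
    ∃ (I : Mdl Λ) (j : M →ₗ[Λ] I), Module.Finite Λ I ∧ Module.Injective Λ I ∧ Injective j := by
  let : Module K M := Module.compHom M (algebraMap K Λ)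
  have : IsScalarTower K Λ M := ⟨fun c a x => by
    rw [Algebra.smul_def, mul_smul]; rfl⟩
  have : Module.Finite K M := Module.Finite.trans Λ M
  let j : M →ₗ[Λ] Coind K Λ M :=
    { toFun := fun y => (show Λ →ₗ[K] M from
        { toFun := fun a => a • y
          map_add' := fun a b => by rw [add_smul]
          map_smul' := fun c a => by rw [smul_assoc]; rfl })
      map_add' := fun y z => LinearMap.ext fun a => smul_add a y z
      map_smul' := fun b y => LinearMap.ext fun a => (mul_smul a b y).symm }
  refine ⟨ModuleCat.of Λ (Coind K Λ M), j, coind_finite K M, coind_injective K M, ?_⟩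
  intro x y hxy
  have := LinearMap.congr_fun (show (show Λ →ₗ[K] M from j x) = j y from hxy) 1
  change (1 : Λ) • x = (1 : Λ) • y at this
  simpa using this

lemma inj_extend {I A B : Type} [AddCommGroup I] [Module Λ I] [AddCommGroup A] [Module Λ A]
    [AddCommGroup B] [Module Λ B] (hI : Module.Injective Λ I) (u : A →ₗ[Λ] B) (hu : Injective u)
    (f : A →ₗ[Λ] I) : ∃ g : B →ₗ[Λ] I, g ∘ₗ u = f := by
  obtain ⟨h, hh⟩ := hI.out u hu f
  exact ⟨h, LinearMap.ext hh⟩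

/-- A map vanishing on the kernel of a map `g` extends to the target of `g`, when its own target is
injective. -/
lemma inj_extend_ker {I A B : Type} [AddCommGroup I] [Module Λ I] [AddCommGroup A] [Module Λ A]
    [AddCommGroup B] [Module Λ B] (hI : Module.Injective Λ I) (g : A →ₗ[Λ] B)
    (f : A →ₗ[Λ] I) (hf : LinearMap.ker g ≤ LinearMap.ker f) :
    ∃ h : B →ₗ[Λ] I, h ∘ₗ g = f := by
  obtain ⟨h, hh⟩ := inj_extend hI ((LinearMap.ker g).liftQ g le_rfl)
    (LinearMap.ker_eq_bot.1 (Submodule.ker_liftQ_eq_bot _ _ _ le_rfl))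
    ((LinearMap.ker g).liftQ f hf)
  refine ⟨h, LinearMap.ext fun x => ?_⟩
  exact LinearMap.congr_fun hh (Submodule.Quotient.mk x)

/-- A finite-length submodule `C` of an injective module `J` has an injective hull inside `J`:
a maximal essential extension of `C` in `J` is a direct summand of `J`. -/
lemma exists_hull {J : Type} [AddCommGroup J] [Module Λ J] [IsNoetherian Λ J]
    (hJ : Module.Injective Λ J) (C : Submodule Λ J) :
    ∃ E : Submodule Λ J, C ≤ E ∧ Module.Injective Λ E ∧
      ∀ N : Submodule Λ J, N ≤ E → N ⊓ C = ⊥ → N = ⊥ := by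
  let S : Set (Submodule Λ J) := {E | C ≤ E ∧ ∀ N : Submodule Λ J, N ≤ E → N ⊓ C = ⊥ → N = ⊥}
  have hS : S.Nonempty := ⟨C, le_rfl, fun N hN h => by rwa [inf_eq_left.2 hN] at h⟩
  obtain ⟨E, ⟨hCE, hE⟩, hEmax⟩ := WellFounded.has_min
    (wellFounded_gt : WellFounded fun a b : Submodule Λ J => a > b) S hS
  let T : Set (Submodule Λ J) := {L | L ⊓ E = ⊥}
  obtain ⟨L, hL, hLmax⟩ := WellFounded.has_min
    (wellFounded_gt : WellFounded fun a b : Submodule Λ J => a > b) T ⟨⊥, bot_inf_eq _⟩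
  -- `E → J ⧸ L` is an essential embedding, and the inclusion of `E` extends along it.
  let u : E →ₗ[Λ] J ⧸ L := L.mkQ ∘ₗ E.subtype
  have hu : Injective u := by
    rw [← LinearMap.ker_eq_bot, LinearMap.ker_eq_bot']
    intro x hx
    have hxL : (x : J) ∈ L := (Submodule.Quotient.mk_eq_zero L).1 hx
    have : (x : J) ∈ L ⊓ E := ⟨hxL, x.2⟩
    rw [show L ⊓ E = ⊥ from hL] at this
    exact Subtype.ext this
  obtain ⟨v, hv⟩ := inj_extend hJ u hu E.subtype
  have hv' : ∀ x : E, v (L.mkQ x) = x := fun x => LinearMap.congr_fun hv x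
  have hvL : LinearMap.ker (v ∘ₗ L.mkQ) = L := by
    have hle : L ≤ LinearMap.ker (v ∘ₗ L.mkQ) := fun x hx => by
      have : L.mkQ x = 0 := (Submodule.Quotient.mk_eq_zero L).2 hx
      simp only [LinearMap.mem_ker, LinearMap.comp_apply, this, map_zero]
    have hT : LinearMap.ker (v ∘ₗ L.mkQ) ∈ T := by
      refine (Submodule.eq_bot_iff _).2 fun x hx => ?_
      have h1 := hv' ⟨x, hx.2⟩
      have h2 : v (L.mkQ x) = 0 := hx.1
      exact h1.symm.trans h2
    by_contra hne
    exact hLmax _ hT (lt_of_le_of_ne hle (Ne.symm hne))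
  -- The image of `J ⧸ L` in `J` is an essential extension of `E`, hence equals `E`.
  have hER : E ≤ LinearMap.range (v ∘ₗ L.mkQ) := fun x hx => ⟨x, hv' ⟨x, hx⟩⟩
  have hR : LinearMap.range (v ∘ₗ L.mkQ) ∈ S := by
    refine ⟨hCE.trans hER, fun N hN hNC => ?_⟩
    have hNE : N ⊓ E = ⊥ := hE _ inf_le_right (by
      rw [inf_assoc, inf_eq_right.2 hCE, hNC])
    have hpre : (N.comap (v ∘ₗ L.mkQ)) ∈ T := by
      refine (Submodule.eq_bot_iff _).2 fun x hx => ?_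
      have h1 : v (L.mkQ x) = x := hv' ⟨x, hx.2⟩
      have h2 : v (L.mkQ x) ∈ N := hx.1
      have : x ∈ N ⊓ E := ⟨h1 ▸ h2, hx.2⟩
      rwa [hNE] at this
    have hle : L ≤ N.comap (v ∘ₗ L.mkQ) := fun x hx => by
      rw [← hvL] at hx
      have h0 : (v ∘ₗ L.mkQ) x = 0 := hx
      rw [Submodule.mem_comap, h0]
      exact N.zero_mem
    have heq : N.comap (v ∘ₗ L.mkQ) = L := by
      by_contra hne
      exact hLmax _ hpre (lt_of_le_of_ne hle (Ne.symm hne))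
    refine (Submodule.eq_bot_iff _).2 fun y hy => ?_
    obtain ⟨x, rfl⟩ := hN hy
    have : x ∈ L := heq ▸ (show x ∈ N.comap (v ∘ₗ L.mkQ) from hy)
    rw [← hvL] at this
    exact this
  have hRE : LinearMap.range (v ∘ₗ L.mkQ) = E := by
    by_contra hne
    exact hEmax _ hR (lt_of_le_of_ne hER (Ne.symm hne))
  refine ⟨E, hCE, ⟨fun A B _ _ _ _ w hw f => ?_⟩, hE⟩
  obtain ⟨g, hg⟩ := inj_extend hJ w hw (E.subtype ∘ₗ f)
  refine ⟨((v ∘ₗ L.mkQ) ∘ₗ g).codRestrict E fun x => hRE ▸ LinearMap.mem_range_self _ _,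
    fun x => Subtype.ext ?_⟩
  have h1 : g (w x) = f x := LinearMap.congr_fun hg x
  change v (L.mkQ (g (w x))) = f x
  rw [h1, hv']

end Injectives

/-! ### Injective copresentations and `Ext¹` -/

section Copresentations

/-- The start `0 → Y → I₀ → I₁` of an injective copresentation of `Y` by finitely generated
modules, minimal at `I₁`: the image of `I₀` is essential in `I₁`. -/
structure Copres (Y : Mdl Λ) where
  I0 : Mdl Λ
  I1 : Mdl Λ
  fin0 : Module.Finite Λ I0
  fin1 : Module.Finite Λ I1
  inj0 : Module.Injective Λ I0
  inj1 : Module.Injective Λ I1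
  j : Y →ₗ[Λ] I0
  q : I0 →ₗ[Λ] I1
  j_inj : Injective j
  exact : LinearMap.range j = LinearMap.ker q
  ess : ∀ N : Submodule Λ I1, N ⊓ LinearMap.range q = ⊥ → N = ⊥

/-- Every map `M → I₁` lifts along `I₀ → I₁`. By `mem_perp`, this expresses `Hom(τ⁻¹Y, M) = 0`. -/
def Copres.Lifts {Y : Mdl Λ} (c : Copres Y) (M : Type) [AddCommGroup M] [Module Λ M] : Prop :=
  ∀ f : M →ₗ[Λ] c.I1, ∃ g : M →ₗ[Λ] c.I0, c.q ∘ₗ g = f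

lemma artinian_of_fd (K Λ : Type) [Field K] [Ring Λ] [Algebra K Λ] [FiniteDimensional K Λ] :
    IsArtinianRing Λ := isArtinian_of_tower K inferInstance

lemma exists_copres (K : Type) [Field K] [Algebra K Λ] [FiniteDimensional K Λ] (Y : Mdl Λ)
    (hY : Module.Finite Λ Y) : Nonempty (Copres Y) := by
  have := artinian_of_fd K Λ
  obtain ⟨I0, j, hfin0, hinj0, hj⟩ := exists_embedding (Λ := Λ) K Y
  obtain ⟨J, e, hfinJ, hinjJ, he⟩ := exists_embedding (Λ := Λ) K (I0 ⧸ LinearMap.range j)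
  obtain ⟨E, hCE, hinjE, hess⟩ := exists_hull hinjJ (LinearMap.range e)
  have hq : LinearMap.ker (e ∘ₗ (LinearMap.range j).mkQ) = LinearMap.range j := by
    rw [LinearMap.ker_comp, LinearMap.ker_eq_bot.2 he, Submodule.comap_bot, Submodule.ker_mkQ]
  refine ⟨⟨I0, ModuleCat.of Λ E, hfin0, inferInstanceAs (Module.Finite Λ E), hinj0, hinjE, j,
    (e ∘ₗ (LinearMap.range j).mkQ).codRestrict E fun x => hCE ⟨_, rfl⟩, hj, ?_, ?_⟩⟩
  · rw [LinearMap.ker_codRestrict, hq]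
  · intro N hN
    have h0 := hess (N.map E.subtype) (Submodule.map_subtype_le E N) (by
      refine (Submodule.eq_bot_iff _).2 ?_
      rintro _ ⟨⟨x, hx, rfl⟩, ⟨y, hy⟩⟩
      obtain ⟨z, rfl⟩ := (LinearMap.range j).mkQ_surjective y
      have : x ∈ (⊥ : Submodule Λ E) := hN ▸ ⟨hx, ⟨z, Subtype.ext hy⟩⟩
      have hx0 : x = 0 := this
      rw [hx0]; rfl)
    exact Submodule.map_injective_of_injective E.injective_subtype
      (h0.trans (Submodule.map_bot E.subtype).symm)

variable {Y : Mdl Λ} (c : Copres Y)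

lemma Copres.q_j (y : Y) : c.q (c.j y) = 0 := by
  have : c.j y ∈ LinearMap.ker c.q := c.exact ▸ LinearMap.mem_range_self _ _
  exact this

/-- A map into `I₀` killed by `I₀ → I₁` comes from a map into `Y`. -/
lemma Copres.factor {A : Type} [AddCommGroup A] [Module Λ A] (f : A →ₗ[Λ] c.I0)
    (hf : ∀ x, c.q (f x) = 0) : ∃ g : A →ₗ[Λ] Y, c.j ∘ₗ g = f := by
  have hr : ∀ x, f x ∈ LinearMap.range c.j := fun x => by rw [c.exact]; exact hf x
  refine ⟨(LinearEquiv.ofInjective c.j c.j_inj).symm.toLinearMap ∘ₗ f.codRestrict _ hr,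
    LinearMap.ext fun x => ?_⟩
  exact congrArg Subtype.val
    ((LinearEquiv.ofInjective c.j c.j_inj).apply_symm_apply ⟨f x, hr x⟩)

/-- A map which vanishes on the kernel of a surjection factors through it. -/
lemma factor_surj {A B C : Type} [AddCommGroup A] [Module Λ A] [AddCommGroup B] [Module Λ B]
    [AddCommGroup C] [Module Λ C] (g : A →ₗ[Λ] B) (hg : Surjective g) (f : A →ₗ[Λ] C)
    (hf : ∀ x, g x = 0 → f x = 0) : ∃ h : B →ₗ[Λ] C, h ∘ₗ g = f := by
  refine ⟨(LinearMap.ker g).liftQ f hf ∘ₗ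
    (LinearMap.quotKerEquivOfSurjective g hg).symm.toLinearMap, LinearMap.ext fun x => ?_⟩
  have : (LinearMap.quotKerEquivOfSurjective g hg).symm (g x) = Submodule.Quotient.mk x := by
    rw [LinearEquiv.symm_apply_eq]; rfl
  simp only [LinearMap.comp_apply, LinearEquiv.coe_coe, this]
  rfl

/-- If `0 → A → E → B → 0` is exact, a map `E → I₁` lifts to `I₀` as soon as its restriction to `A`
and all maps `B → I₁` do. -/
lemma Copres.lift_of_ses {A E B : Type} [AddCommGroup A] [Module Λ A] [AddCommGroup B] [Module Λ B]
    [AddCommGroup E] [Module Λ E] (u : A →ₗ[Λ] E) (v : E →ₗ[Λ] B) (hu : Injective u)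
    (hv : Surjective v) (huv : LinearMap.range u = LinearMap.ker v) (f : E →ₗ[Λ] c.I1)
    (hA : ∃ g : A →ₗ[Λ] c.I0, c.q ∘ₗ g = f ∘ₗ u)
    (hB : c.Lifts B) :
    ∃ g : E →ₗ[Λ] c.I0, c.q ∘ₗ g = f := by
  obtain ⟨g, hg⟩ := hA
  obtain ⟨g', hg'⟩ := inj_extend c.inj0 u hu g
  obtain ⟨f', hf'⟩ := factor_surj v hv (f - c.q ∘ₗ g') (fun x hx => by
    have : x ∈ LinearMap.range u := huv ▸ hx
    obtain ⟨a, rfl⟩ := this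
    have h1 : g' (u a) = g a := LinearMap.congr_fun hg' a
    have h2 : c.q (g a) = f (u a) := LinearMap.congr_fun hg a
    simp [h1, h2])
  obtain ⟨k, hk⟩ := hB f'
  refine ⟨g' + k ∘ₗ v, LinearMap.ext fun x => ?_⟩
  have h1 : c.q (k (v x)) = f' (v x) := LinearMap.congr_fun hk _
  have h2 : f' (v x) = f x - c.q (g' x) := LinearMap.congr_fun hf' x
  simp [h1, h2]

lemma ext1_iff (A : Mdl Λ) : Ext1Zero Λ A Y ↔ ∀ f : A →ₗ[Λ] c.I1,
    LinearMap.range f ≤ LinearMap.range c.q → ∃ g : A →ₗ[Λ] c.I0, c.q ∘ₗ g = f := by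
  constructor
  · intro h f hf
    -- The pullback of `I₀ → I₁` along `f` is an extension of `A` by `Y`.
    let P : Submodule Λ (A × c.I0) :=
      LinearMap.ker (f ∘ₗ LinearMap.fst Λ A c.I0 - c.q ∘ₗ LinearMap.snd Λ A c.I0)
    have hP : ∀ x : P, f x.1.1 = c.q x.1.2 := fun x => sub_eq_zero.1 x.2
    let u : Y →ₗ[Λ] P := (LinearMap.prod 0 c.j).codRestrict P fun y => by
      simp [P, c.q_j]
    let v : P →ₗ[Λ] A := LinearMap.fst Λ A c.I0 ∘ₗ P.subtype
    obtain ⟨s, hs⟩ := h (ModuleCat.of Λ P) u v ⟨fun x y hxy => c.j_inj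
        (congrArg (fun z : P => z.1.2) hxy), fun a => by
          obtain ⟨y, hy⟩ := hf (LinearMap.mem_range_self f a)
          exact ⟨⟨(a, y), by simp [P, hy]⟩, rfl⟩, by
        ext x
        constructor
        · rintro ⟨y, rfl⟩; rfl
        · intro hx
          have hx1 : x.1.1 = 0 := hx
          have h2 : c.q x.1.2 = 0 := by rw [← hP x, hx1, map_zero]
          have h3 : x.1.2 ∈ LinearMap.range c.j := by rw [c.exact]; exact h2
          obtain ⟨y, hy⟩ := h3
          exact ⟨y, Subtype.ext (Prod.ext hx1.symm hy)⟩⟩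
    refine ⟨LinearMap.snd Λ A c.I0 ∘ₗ P.subtype ∘ₗ s, LinearMap.ext fun a => ?_⟩
    have h1 : (s a : P).1.1 = a := LinearMap.congr_fun hs a
    have h2 := hP (s a)
    rw [h1] at h2
    exact h2.symm
  · rintro h E f g ⟨hf, hg, hfg⟩
    obtain ⟨e, he⟩ := inj_extend c.inj0 f hf c.j
    obtain ⟨k, hk⟩ := factor_surj g hg (c.q ∘ₗ e) (fun x hx => by
      have : x ∈ LinearMap.range f := hfg ▸ hx
      obtain ⟨a, rfl⟩ := this
      have h1 : e (f a) = c.j a := LinearMap.congr_fun he a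
      simp [h1, c.q_j])
    obtain ⟨l, hl⟩ := h k (by
      rintro _ ⟨a, rfl⟩
      obtain ⟨x, rfl⟩ := hg a
      exact ⟨e x, (LinearMap.congr_fun hk x).symm⟩)
    obtain ⟨r, hr⟩ := c.factor (e - l ∘ₗ g) (fun x => by
      have h1 : c.q (l (g x)) = k (g x) := LinearMap.congr_fun hl _
      have h2 : k (g x) = c.q (e x) := LinearMap.congr_fun hk x
      simp [h1, h2])
    have hgf : ∀ a, g (f a) = 0 := fun a => by
      have : f a ∈ LinearMap.ker g := hfg ▸ LinearMap.mem_range_self _ _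
      exact this
    have hrf : ∀ a, r (f a) = a := fun a => c.j_inj (by
      have h1 : c.j (r (f a)) = e (f a) - l (g (f a)) := LinearMap.congr_fun hr (f a)
      have h2 : e (f a) = c.j a := LinearMap.congr_fun he a
      rw [h1, h2, hgf, map_zero, sub_zero])
    obtain ⟨s, hs⟩ := factor_surj g hg (LinearMap.id - f ∘ₗ r) (fun x hx => by
      have : x ∈ LinearMap.range f := hfg ▸ hx
      obtain ⟨a, rfl⟩ := this
      simp [hrf])
    refine ⟨s, LinearMap.ext fun a => ?_⟩
    obtain ⟨x, rfl⟩ := hg a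
    have h1 : s (g x) = x - f (r x) := LinearMap.congr_fun hs x
    simp [h1, hgf]

/-- When `Ext¹(B, Y) = 0`, maps to `Y` extend along monomorphisms with cokernel `B`. -/
lemma ext1_extend (c : Copres Y) {A E B : Mdl Λ} (h : Ext1Zero Λ B Y) (u : A →ₗ[Λ] E) (v : E →ₗ[Λ] B)
    (hs : IsSESeq Λ u v) (φ : A →ₗ[Λ] Y) : ∃ ψ : E →ₗ[Λ] Y, ψ ∘ₗ u = φ := by
  obtain ⟨hu, hv, huv⟩ := hs
  obtain ⟨e, he⟩ := inj_extend c.inj0 u hu (c.j ∘ₗ φ)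
  have he' : ∀ a, e (u a) = c.j (φ a) := fun a => LinearMap.congr_fun he a
  obtain ⟨k, hk⟩ := factor_surj v hv (c.q ∘ₗ e) (fun x hx => by
    have : x ∈ LinearMap.range u := huv ▸ hx
    obtain ⟨a, rfl⟩ := this
    simp [he', c.q_j])
  obtain ⟨l, hl⟩ := (ext1_iff c B).1 h k (by
    rintro _ ⟨a, rfl⟩
    obtain ⟨x, rfl⟩ := hv a
    exact ⟨e x, (LinearMap.congr_fun hk x).symm⟩)
  obtain ⟨r, hr⟩ := c.factor (e - l ∘ₗ v) (fun x => by
    have h1 : c.q (l (v x)) = k (v x) := LinearMap.congr_fun hl _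
    have h2 : k (v x) = c.q (e x) := LinearMap.congr_fun hk x
    simp [h1, h2])
  refine ⟨r, LinearMap.ext fun a => c.j_inj ?_⟩
  have hvu : v (u a) = 0 := by
    have : u a ∈ LinearMap.ker v := huv ▸ LinearMap.mem_range_self _ _
    exact this
  have h1 : c.j (r (u a)) = e (u a) - l (v (u a)) := LinearMap.congr_fun hr _
  rw [LinearMap.comp_apply, h1, he', hvu, map_zero, sub_zero]

/-- Essentiality of the image of `I₀` in `I₁`: it suffices to lift `f : M → I₁` on the preimage of
the image of `I₀`. -/
lemma Copres.lift_of_preimage {M : Type} [AddCommGroup M] [Module Λ M] (f : M →ₗ[Λ] c.I1)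
    (h : ∃ g : (LinearMap.range c.q).comap f →ₗ[Λ] c.I0,
      c.q ∘ₗ g = f ∘ₗ ((LinearMap.range c.q).comap f).subtype) :
    ∃ g : M →ₗ[Λ] c.I0, c.q ∘ₗ g = f := by
  obtain ⟨g, hg⟩ := h
  obtain ⟨g', hg'⟩ := inj_extend c.inj0 _ (Submodule.injective_subtype _) g
  refine ⟨g', ?_⟩
  have h0 := c.ess (LinearMap.range (f - c.q ∘ₗ g')) (by
    refine (Submodule.eq_bot_iff _).2 ?_
    rintro _ ⟨⟨x, rfl⟩, hx⟩
    have hfx : f x ∈ LinearMap.range c.q := by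
      have h1 : f x = (f - c.q ∘ₗ g') x + c.q (g' x) := by simp
      rw [h1]; exact Submodule.add_mem _ hx (LinearMap.mem_range_self _ _)
    have h1 : g' x = g ⟨x, hfx⟩ := LinearMap.congr_fun hg' ⟨x, hfx⟩
    have h2 : c.q (g ⟨x, hfx⟩) = f x := LinearMap.congr_fun hg ⟨x, hfx⟩
    simp [h1, h2])
  rw [LinearMap.range_eq_bot, sub_eq_zero] at h0
  exact h0.symm

end Copresentations

/-! ### The classes `Cogen Z` and `(τ⁻¹Z)^⊥` -/

section Classes

lemma mem_cogen {Z M : Mdl Λ} : M ∈ Cogen Λ Z ↔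
    Module.Finite Λ M ∧ ∃ (n : ℕ) (f : M →ₗ[Λ] (Fin n → Z)), Injective f := by
  constructor
  · rintro ⟨hM, Y, ⟨n, i, p, hp⟩, f, hf⟩
    refine ⟨hM, n, i ∘ₗ f, fun x y hxy => hf ?_⟩
    have h := congrArg p hxy
    have h1 : ∀ z, p (i z) = z := fun z => LinearMap.congr_fun hp z
    simpa [h1] using h
  · rintro ⟨hM, n, f, hf⟩
    exact ⟨hM, ModuleCat.of Λ (Fin n → Z), ⟨n, LinearMap.id, LinearMap.id, rfl⟩, f, hf⟩

lemma Copres.lifts_sub {Y : Mdl Λ} (c : Copres Y) {M N : Type} [AddCommGroup M] [Module Λ M]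
    [AddCommGroup N] [Module Λ N] (h : c.Lifts M) (u : N →ₗ[Λ] M) (hu : Injective u) :
    c.Lifts N := by
  intro f
  obtain ⟨e, rfl⟩ := inj_extend c.inj1 u hu f
  obtain ⟨g, rfl⟩ := h e
  exact ⟨g ∘ₗ u, rfl⟩

lemma Copres.lifts_pi {Y : Mdl Λ} (c : Copres Y) {M : Type} [AddCommGroup M] [Module Λ M]
    (h : c.Lifts M) (n : ℕ) : c.Lifts (Fin n → M) := by
  intro f
  choose g hg using fun i => h (f ∘ₗ LinearMap.single Λ (fun _ => M) i)
  refine ⟨LinearMap.lsum Λ (fun _ => M) ℕ g, LinearMap.pi_ext' fun i => ?_⟩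
  rw [← hg i]
  ext x
  have h0 : ∀ b ∈ Finset.univ, b ≠ i → c.q ((g b) ((Pi.single i x : Fin n → M) b)) = 0 := fun b _ hb => by
    rw [Pi.single_eq_of_ne hb, map_zero, map_zero]
  simp [Finset.sum_eq_single i h0]

/-- The Auslander–Smalø characterization: `(τ⁻¹Y)^⊥` consists of the modules `M` for which
`Hom(M, I₀) → Hom(M, I₁)` is surjective. -/
lemma mem_perp {Y : Mdl Λ} (c : Copres Y) (M : Mdl Λ) [IsNoetherianRing Λ] :
    M ∈ perpTauInv Λ Y ↔ Module.Finite Λ M ∧ c.Lifts M := by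
  constructor
  · rintro ⟨hM, h⟩
    refine ⟨hM, fun f => c.lift_of_preimage f ?_⟩
    refine (ext1_iff c (ModuleCat.of Λ ((LinearMap.range c.q).comap f))).1 (h _ ?_) _ ?_
    · exact mem_cogen.2 ⟨inferInstanceAs (Module.Finite Λ ((LinearMap.range c.q).comap f)), 1,
        LinearMap.pi fun _ => ((LinearMap.range c.q).comap f).subtype,
        fun x y hxy => Subtype.ext (congrFun hxy 0)⟩
    · rintro _ ⟨x, rfl⟩
      exact x.2
  · rintro ⟨hM, h⟩
    refine ⟨hM, fun N hN => (ext1_iff c N).2 fun f _ => ?_⟩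
    obtain ⟨-, n, u, hu⟩ := mem_cogen.1 hN
    exact c.lifts_sub (c.lifts_pi h n) u hu f

lemma perp_ext1 {Y M : Mdl Λ} (h : M ∈ perpTauInv Λ Y) : Ext1Zero Λ M Y :=
  h.2 M (mem_cogen.2 ⟨h.1, 1, LinearMap.pi fun _ => LinearMap.id, fun _ _ hxy => congrFun hxy 0⟩)

lemma isTorf_perp [IsNoetherianRing Λ] {Y : Mdl Λ} (c : Copres Y) :
    IsTorf Λ (perpTauInv Λ Y) := by
  refine ⟨fun M hM => hM.1, ⟨ModuleCat.of Λ PUnit, (mem_perp c _).2 ⟨?_, fun f => ⟨0, ?_⟩⟩, ?_⟩,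
    ?_, ?_⟩
  · exact inferInstanceAs (Module.Finite Λ PUnit)
  · ext x; rw [Subsingleton.elim x 0]; simp
  · exact inferInstanceAs (Subsingleton PUnit)
  · intro A E B u v hs hA hB hE
    refine (mem_perp c _).2 ⟨hE, fun f => ?_⟩
    exact c.lift_of_ses u v hs.1 hs.2.1 hs.2.2 f (((mem_perp c A).1 hA).2 _)
      ((mem_perp c B).1 hB).2
  · rintro M N hM hN ⟨u, hu⟩
    exact (mem_perp c _).2 ⟨hM, c.lifts_sub ((mem_perp c N).1 hN).2 u hu⟩

lemma cogen_sub {Z M N : Mdl Λ} (hM : Module.Finite Λ M) (hN : N ∈ Cogen Λ Z)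
    (u : M →ₗ[Λ] N) (hu : Injective u) : M ∈ Cogen Λ Z := by
  obtain ⟨-, n, f, hf⟩ := mem_cogen.1 hN
  exact mem_cogen.2 ⟨hM, n, f ∘ₗ u, hf.comp hu⟩

/-- Closure of `Cogen Z` under extensions is where rigidity enters: maps to `Z` extend along
monomorphisms with cokernel in `Cogen Z`. -/
lemma isTorf_cogen {Z : Mdl Λ} (c : Copres Z) (hZ : TauInvRigid Λ Z) :
    IsTorf Λ (Cogen Λ Z) := by
  refine ⟨fun M hM => hM.1, ⟨ModuleCat.of Λ PUnit, mem_cogen.2 ⟨?_, 0, 0, ?_⟩, ?_⟩,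
    ?_, ?_⟩
  · exact inferInstanceAs (Module.Finite Λ PUnit)
  · exact fun x y _ => rfl
  · exact inferInstanceAs (Subsingleton PUnit)
  · intro A E B u v hs hA hB hE
    obtain ⟨-, n, f, hf⟩ := mem_cogen.1 hA
    obtain ⟨-, n', f', hf'⟩ := mem_cogen.1 hB
    choose g hg using fun i => ext1_extend c (hZ.2 B hB) u v hs (LinearMap.proj i ∘ₗ f)
    refine mem_cogen.2 ⟨hE, n + n', (LinearMap.pi fun i : Fin (n + n') =>
      Fin.addCases (motive := fun _ => E →ₗ[Λ] Z) g (fun i => LinearMap.proj i ∘ₗ f' ∘ₗ v) i), ?_⟩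
    rw [← LinearMap.ker_eq_bot, LinearMap.ker_eq_bot']
    intro x hx
    have hv : v x = 0 := by
      apply hf'
      rw [map_zero]
      ext i
      simpa using congrFun hx (Fin.natAdd n i)
    have : x ∈ LinearMap.range u := hs.2.2 ▸ hv
    obtain ⟨a, rfl⟩ := this
    have ha : f a = 0 := by
      ext i
      have h1 : g i (u a) = f a i := LinearMap.congr_fun (hg i) a
      have h2 : g i (u a) = 0 := by simpa using congrFun hx (Fin.castAdd n' i)
      rw [← h1, h2]; rfl
    rw [hf (ha.trans (map_zero f).symm), map_zero]
  · rintro M N hM hN ⟨u, hu⟩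
    exact cogen_sub hM hN u hu

variable {C : Set (Mdl Λ)}

lemma torf_fin (hC : IsTorf Λ C) {M : Mdl Λ} (h : M ∈ C) : Module.Finite Λ M := hC.1 h

lemma torf_sub [IsNoetherianRing Λ] (hC : IsTorf Λ C) {M N : Mdl Λ} (h : N ∈ C)
    (u : M →ₗ[Λ] N) (hu : Injective u) : M ∈ C :=
  have := torf_fin hC h
  hC.2.2.2 M N (Module.Finite.of_injective u hu) h ⟨u, hu⟩

lemma torf_ext (hC : IsTorf Λ C) {A E B : Mdl Λ} (hA : A ∈ C) (hB : B ∈ C)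
    (u : A →ₗ[Λ] E) (v : E →ₗ[Λ] B) (hs : IsSESeq Λ u v) : E ∈ C :=
  hC.2.2.1 A E B u v hs hA hB (by
    have := torf_fin hC hA
    have := torf_fin hC hB
    have : Module.Finite Λ (LinearMap.ker v) := hs.2.2 ▸ Module.Finite.range u
    have : Module.Finite Λ (E ⧸ LinearMap.ker v) :=
      Module.Finite.equiv (LinearMap.quotKerEquivOfSurjective v hs.2.1).symm
    exact Module.Finite.of_submodule_quotient (LinearMap.ker v))

/-- In an extension given by a submodule. -/
lemma torf_ext_sub (hC : IsTorf Λ C) {E : Mdl Λ} (A : Submodule Λ E) (hA : ModuleCat.of Λ A ∈ C)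
    (hB : ModuleCat.of Λ (E ⧸ A) ∈ C) : E ∈ C :=
  torf_ext hC hA hB A.subtype A.mkQ ⟨A.injective_subtype, A.mkQ_surjective, by simp⟩

lemma torf_zero [IsNoetherianRing Λ] (hC : IsTorf Λ C) {M : Mdl Λ} (h : Subsingleton M) :
    M ∈ C := by
  obtain ⟨Z, hZ, -⟩ := hC.2.1
  exact torf_sub hC hZ 0 fun x y _ => Subsingleton.elim x y

lemma torf_pi [IsNoetherianRing Λ] (hC : IsTorf Λ C) {M : Mdl Λ} (h : M ∈ C) (n : ℕ) :
    ModuleCat.of Λ (Fin n → M) ∈ C := by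
  induction n with
  | zero => exact torf_zero hC (inferInstanceAs (Subsingleton (Fin 0 → M)))
  | succ n ih =>
    refine torf_ext hC (A := ModuleCat.of Λ (Fin n → M)) (B := M) ih h
      (LinearMap.pi (Fin.cons 0 fun i => LinearMap.proj i))
      (LinearMap.proj 0) ⟨?_, ?_, ?_⟩
    · intro x y hxy
      ext i
      simpa using congrFun hxy i.succ
    · exact fun m => ⟨fun _ => m, rfl⟩
    · ext x
      constructor
      · rintro ⟨y, rfl⟩
        simp
      · intro hx
        refine ⟨fun i => x i.succ, ?_⟩
        ext i
        refine Fin.cases ?_ (fun i => ?_) i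
        · simpa using (show x 0 = 0 from hx).symm
        · simp

lemma torf_inter [IsNoetherianRing Λ] {D : Set (Mdl Λ)} (hC : IsTorf Λ C) (hD : IsTorf Λ D) :
    IsTorf Λ (C ∩ D) := by
  refine ⟨fun M hM => hC.1 hM.1, ?_, ?_, ?_⟩
  · exact ⟨ModuleCat.of Λ PUnit, ⟨torf_zero hC (inferInstanceAs (Subsingleton PUnit)),
      torf_zero hD (inferInstanceAs (Subsingleton PUnit))⟩, inferInstanceAs (Subsingleton PUnit)⟩
  · exact fun A E B u v hs hA hB _ =>
      ⟨torf_ext hC hA.1 hB.1 u v hs, torf_ext hD hA.2 hB.2 u v hs⟩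
  · rintro M N hM hN ⟨u, hu⟩
    exact ⟨torf_sub hC hN.1 u hu, torf_sub hD hN.2 u hu⟩

lemma torf_sInter [IsNoetherianRing Λ] {S : Set (Set (Mdl Λ))} (hne : S.Nonempty)
    (hS : ∀ C ∈ S, IsTorf Λ C) : IsTorf Λ (⋂₀ S) := by
  obtain ⟨C0, hC0⟩ := hne
  refine ⟨fun M hM => (hS C0 hC0).1 (hM C0 hC0), ?_, ?_, ?_⟩
  · exact ⟨ModuleCat.of Λ PUnit, fun C hC =>
      torf_zero (hS C hC) (inferInstanceAs (Subsingleton PUnit)),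
      inferInstanceAs (Subsingleton PUnit)⟩
  · exact fun A E B u v hs hA hB _ C hC => torf_ext (hS C hC) (hA C hC) (hB C hC) u v hs
  · rintro M N hM hN ⟨u, hu⟩ C hC
    exact torf_sub (hS C hC) (hN C hC) u hu

/-- The canonical sequence of the torsion pair `(⊥C, C)`. -/
lemma torf_torsion [IsArtinianRing Λ] (hC : IsTorf Λ C) (M : Mdl Λ) (hM : Module.Finite Λ M) :
    ∃ t : Submodule Λ M, ModuleCat.of Λ (M ⧸ t) ∈ C ∧ ModuleCat.of Λ t ∈ perpL Λ C := by
  obtain ⟨t, ht, hmin⟩ := WellFounded.has_min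
    (wellFounded_lt : WellFounded fun a b : Submodule Λ M => a < b)
    {t | ModuleCat.of Λ (M ⧸ t) ∈ C}
    ⟨⊤, torf_zero hC (inferInstanceAs (Subsingleton (M ⧸ (⊤ : Submodule Λ M))))⟩
  refine ⟨t, ht, inferInstanceAs (Module.Finite Λ t), fun X hX f => ?_⟩
  let s : Submodule Λ M := (LinearMap.ker f).map t.subtype
  have hst : s ≤ t := Submodule.map_subtype_le t _
  have hmem : ∀ x : t, (x : M) ∈ s ↔ f x = 0 := fun x => by
    constructor
    · rintro ⟨y, hy, hyx⟩
      rw [← Subtype.ext hyx]; exact hy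
    · exact fun hx => ⟨x, hx, rfl⟩
  -- `M ⧸ s` is an extension of `M ⧸ t` by the image of `f`.
  have hs : ModuleCat.of Λ (M ⧸ s) ∈ C := by
    have hR : ModuleCat.of Λ (LinearMap.range f) ∈ C :=
      torf_sub hC hX (LinearMap.range f).subtype (Submodule.injective_subtype _)
    obtain ⟨u, hu⟩ := factor_surj f.rangeRestrict f.surjective_rangeRestrict (s.mkQ ∘ₗ t.subtype)
      (fun x hx => (Submodule.Quotient.mk_eq_zero s).2 ((hmem x).2 (congrArg Subtype.val hx)))
    have hu' : ∀ x : t, u (f.rangeRestrict x) = s.mkQ x := fun x => LinearMap.congr_fun hu x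
    refine torf_ext hC hR ht u (Submodule.factor hst) ⟨?_, ?_, ?_⟩
    · rw [← LinearMap.ker_eq_bot, LinearMap.ker_eq_bot']
      intro y hy
      obtain ⟨x, rfl⟩ := f.surjective_rangeRestrict y
      rw [hu'] at hy
      exact Subtype.ext ((hmem x).1 ((Submodule.Quotient.mk_eq_zero s).1 hy))
    · exact Submodule.factor_surjective hst
    · ext z
      obtain ⟨m, rfl⟩ := s.mkQ_surjective z
      constructor
      · rintro ⟨y, hy⟩
        obtain ⟨x, rfl⟩ := f.surjective_rangeRestrict y
        rw [hu'] at hy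
        rw [← hy]
        exact (Submodule.Quotient.mk_eq_zero t).2 x.2
      · intro hz
        have : m ∈ t := (Submodule.Quotient.mk_eq_zero t).1 hz
        exact ⟨f.rangeRestrict ⟨m, this⟩, hu' ⟨m, this⟩⟩
  have hts : s = t := by
    by_contra hne
    exact hmin s hs (lt_of_le_of_ne hst hne)
  exact LinearMap.ext fun x => (hmem x).1 (hts.ge x.2)

/-- Torsion-free classes have surjective left approximations. -/
lemma torf_contraFin [IsArtinianRing Λ] (hC : IsTorf Λ C) : ContraFin Λ C := by
  intro M hM
  obtain ⟨t, ht, ht'⟩ := torf_torsion hC M hM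
  refine ⟨_, ht, t.mkQ, fun C' hC' f => factor_surj t.mkQ t.mkQ_surjective f fun x hx => ?_⟩
  have hx' : x ∈ t := (Submodule.Quotient.mk_eq_zero t).1 hx
  exact LinearMap.congr_fun (ht'.2 C' hC' (f ∘ₗ t.subtype)) ⟨x, hx'⟩

end Classes

/-! ### Universal extensions and right approximations -/

section FiniteHom

/-- `Hom_Λ(M, N)` is spanned over the central subfield `K` by finitely many maps. -/
lemma finite_hom (K : Type) [Field K] [Algebra K Λ] [FiniteDimensional K Λ] (M N : Type)
    [AddCommGroup M] [Module Λ M] [AddCommGroup N] [Module Λ N] [Module.Finite Λ M]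
    [Module.Finite Λ N] : ∃ (r : ℕ) (g : Fin r → M →ₗ[Λ] N), ∀ f : M →ₗ[Λ] N,
      ∃ a : Fin r → K, ∀ x, f x = ∑ i, algebraMap K Λ (a i) • g i x := by
  let : Module K M := Module.compHom M (algebraMap K Λ)
  let : Module K N := Module.compHom N (algebraMap K Λ)
  have : IsScalarTower K Λ M := ⟨fun c a x => by rw [Algebra.smul_def, mul_smul]; rfl⟩
  have : IsScalarTower K Λ N := ⟨fun c a x => by rw [Algebra.smul_def, mul_smul]; rfl⟩
  have : SMulCommClass Λ K N := IsScalarTower.to_smulCommClass'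
  have : Module.Finite K M := Module.Finite.trans Λ M
  have : Module.Finite K N := Module.Finite.trans Λ N
  have : Module.Finite K (M →ₗ[Λ] N) :=
    Module.Finite.of_injective (LinearMap.restrictScalarsₗ K Λ M N K)
      (LinearMap.restrictScalars_injective K)
  obtain ⟨r, g, hg⟩ := Module.Finite.exists_fin (R := K) (M := M →ₗ[Λ] N)
  refine ⟨r, g, fun f => ?_⟩
  obtain ⟨a, ha⟩ := (Submodule.mem_span_range_iff_exists_fun K).1 (hg ▸ Submodule.mem_top : f ∈ _)
  refine ⟨a, fun x => ?_⟩
  rw [← ha, LinearMap.sum_apply]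
  rfl

/-- Multiplication by a scalar of the central subfield `K`, as a `Λ`-linear map. -/
def scal {K : Type} [Field K] [Algebra K Λ] (a : K) (M : Type) [AddCommGroup M] [Module Λ M] :
    M →ₗ[Λ] M where
  toFun x := algebraMap K Λ a • x
  map_add' x y := smul_add _ x y
  map_smul' b x := by
    rw [← mul_smul, Algebra.commutes a b, mul_smul]; rfl

/-- `Cogen Z` has right approximations: for `M ⊆ I` with `I` injective, pull back a right
`add Z`-approximation of `I` along `M ⊆ I`. -/
lemma cogen_covFin (K : Type) [Field K] [Algebra K Λ] [FiniteDimensional K Λ] {Z : Mdl Λ}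
    (hZ : Module.Finite Λ Z) : CovFin Λ (Cogen Λ Z) := by
  intro M hM
  have := artinian_of_fd K Λ
  have : Module.Finite Λ M := hM
  obtain ⟨I, j, hfin, hinj, hj⟩ := exists_embedding (Λ := Λ) K M
  obtain ⟨r, g, hg⟩ := finite_hom (Λ := Λ) K Z I
  let G : (Fin r → Z) →ₗ[Λ] I := ∑ i, g i ∘ₗ LinearMap.proj i
  have hG : ∀ z, G z = ∑ i, g i (z i) := fun z => by simp [G]
  let P : Submodule Λ ((Fin r → Z) × M) :=
    LinearMap.ker (G ∘ₗ LinearMap.fst Λ (Fin r → Z) M - j ∘ₗ LinearMap.snd Λ (Fin r → Z) M)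
  have hP : ∀ x : P, G x.1.1 = j x.1.2 := fun x => sub_eq_zero.1 x.2
  refine ⟨ModuleCat.of Λ P, mem_cogen.2 ⟨inferInstanceAs (Module.Finite Λ P), r,
    LinearMap.fst Λ (Fin r → Z) M ∘ₗ P.subtype, ?_⟩,
    LinearMap.snd Λ (Fin r → Z) M ∘ₗ P.subtype, ?_⟩
  · intro x y hxy
    have h1 : x.1.1 = y.1.1 := hxy
    exact Subtype.ext (Prod.ext h1 (hj (by rw [← hP, ← hP, h1])))
  · intro C hC f
    obtain ⟨-, n, ι, hι⟩ := mem_cogen.1 hC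
    obtain ⟨F, hF⟩ := inj_extend hinj ι hι (j ∘ₗ f)
    choose a ha using fun k => hg (F ∘ₗ LinearMap.single Λ (fun _ => Z) k)
    let φ : C →ₗ[Λ] (Fin r → Z) :=
      LinearMap.pi fun i => ∑ k, scal (a k i) Z ∘ₗ LinearMap.proj k ∘ₗ ι
    have hφ : ∀ x, G (φ x) = j (f x) := fun x => by
      have h1 : F (ι x) = j (f x) := LinearMap.congr_fun hF x
      have h2 : F (ι x) = ∑ k, F (LinearMap.single Λ (fun _ => Z) k (ι x k)) := by
        rw [← map_sum]
        congr 1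
        exact (LinearMap.sum_single_apply _ (ι x)).symm
      rw [hG, ← h1, h2]
      have h3 : ∀ k, F (LinearMap.single Λ (fun _ => Z) k (ι x k)) =
          ∑ i, algebraMap K Λ (a k i) • g i (ι x k) := fun k => ha k (ι x k)
      simp only [h3]
      rw [Finset.sum_comm]
      refine Finset.sum_congr rfl fun i _ => ?_
      simp only [φ, LinearMap.pi_apply, LinearMap.sum_apply, map_sum]
      refine Finset.sum_congr rfl fun k _ => ?_
      exact map_smul (g i) _ _
    exact ⟨(φ.prod f).codRestrict P fun x => sub_eq_zero.2 (hφ x), rfl⟩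

/-- The universal extension. For `Y` satisfying `Hom(τ⁻¹Y, Y) = 0`, the pullback `U` of
`I₀^r → I₁^r` along a spanning family of `Hom(M, I₁)` lies in `(τ⁻¹Y)^⊥`, and `U → M` is a right
approximation whose kernel is a power of `Y`. -/
lemma univ_ext (K : Type) [Field K] [Algebra K Λ] [FiniteDimensional K Λ] {Y : Mdl Λ}
    (c : Copres Y) (hY : c.Lifts Y) (M : Mdl Λ) (hM : Module.Finite Λ M) :
    ∃ (r : ℕ) (U : Mdl Λ) (i : (Fin r → Y) →ₗ[Λ] U) (π : U →ₗ[Λ] M),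
      Module.Finite Λ U ∧ c.Lifts U ∧ Injective i ∧ LinearMap.range i = LinearMap.ker π ∧
      (∀ N : Mdl Λ, c.Lifts N → ∀ f : N →ₗ[Λ] M, ∃ g : N →ₗ[Λ] U, π ∘ₗ g = f) ∧
      ∀ x, (∀ f : M →ₗ[Λ] c.I1, f x ∈ LinearMap.range c.q) → x ∈ LinearMap.range π := by
  have := artinian_of_fd K Λ
  have := c.fin0
  have := c.fin1
  obtain ⟨r, g, hg⟩ := finite_hom (Λ := Λ) K M c.I1
  let P : Submodule Λ (M × (Fin r → c.I0)) :=
    LinearMap.ker (LinearMap.pi fun k => g k ∘ₗ LinearMap.fst Λ M (Fin r → c.I0) -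
      c.q ∘ₗ LinearMap.proj k ∘ₗ LinearMap.snd Λ M (Fin r → c.I0))
  have hmem : ∀ x, x ∈ P ↔ ∀ k, g k x.1 = c.q (x.2 k) := fun x => by
    rw [LinearMap.mem_ker, funext_iff]
    exact forall_congr' fun k => sub_eq_zero
  let i : (Fin r → Y) →ₗ[Λ] P :=
    (LinearMap.prod 0 (LinearMap.pi fun k => c.j ∘ₗ LinearMap.proj k)).codRestrict P fun y =>
      (hmem _).2 fun k => by simp [c.q_j]
  let π : P →ₗ[Λ] M := LinearMap.fst Λ M (Fin r → c.I0) ∘ₗ P.subtype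
  have hi : Injective i := fun x y hxy => by
    ext k
    exact c.j_inj (congrFun (congrArg (fun z : P => z.1.2) hxy) k)
  have hiπ : LinearMap.range i = LinearMap.ker π := by
    ext x
    constructor
    · rintro ⟨y, rfl⟩; rfl
    · intro hx
      have hx1 : x.1.1 = 0 := hx
      have h3 : ∀ k, x.1.2 k ∈ LinearMap.range c.j := fun k => by
        rw [c.exact, LinearMap.mem_ker, ← (hmem _).1 x.2 k, hx1, map_zero]
      choose y hy using h3
      exact ⟨y, Subtype.ext (Prod.ext hx1.symm (funext hy))⟩
  refine ⟨r, ModuleCat.of Λ P, i, π, inferInstanceAs (Module.Finite Λ P), ?_, hi, hiπ, ?_, ?_⟩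
  · intro f
    obtain ⟨k, hk⟩ := c.lifts_pi hY r (f ∘ₗ i)
    obtain ⟨k', hk'⟩ := inj_extend c.inj0 i hi k
    obtain ⟨h, hh⟩ := inj_extend_ker c.inj1 π (f - c.q ∘ₗ k') (by
      rw [← hiπ]
      rintro _ ⟨y, rfl⟩
      have h1 : k' (i y) = k y := LinearMap.congr_fun hk' y
      have h2 : c.q (k y) = f (i y) := LinearMap.congr_fun hk y
      rw [LinearMap.mem_ker, LinearMap.sub_apply, LinearMap.comp_apply, h1, h2, sub_self])
    obtain ⟨a, ha⟩ := hg h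
    refine ⟨k' + ∑ l, scal (a l) c.I0 ∘ₗ LinearMap.proj l ∘ₗ
      LinearMap.snd Λ M (Fin r → c.I0) ∘ₗ P.subtype, LinearMap.ext fun x => ?_⟩
    have h1 : h (π x) = f x - c.q (k' x) := LinearMap.congr_fun hh x
    have h2 : c.q ((∑ l, scal (a l) c.I0 ∘ₗ LinearMap.proj l ∘ₗ
      LinearMap.snd Λ M (Fin r → c.I0) ∘ₗ P.subtype) x) = h (π x) := by
      rw [ha, LinearMap.sum_apply, map_sum]
      refine Finset.sum_congr rfl fun l _ => ?_
      refine (map_smul c.q _ _).trans ?_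
      exact congrArg _ ((hmem _).1 x.2 l).symm
    rw [LinearMap.comp_apply, LinearMap.add_apply, map_add, h2, h1, add_sub_cancel]
  · intro N hN f
    choose l hl using fun k => hN (g k ∘ₗ f)
    exact ⟨(f.prod (LinearMap.pi l)).codRestrict P fun x =>
      (hmem _).2 fun k => (LinearMap.congr_fun (hl k) x).symm, rfl⟩
  · intro x hx
    choose y hy using fun k => hx (g k)
    exact ⟨⟨(x, y), (hmem _).2 fun k => (hy k).symm⟩, rfl⟩

lemma perp_covFin (K : Type) [Field K] [Algebra K Λ] [FiniteDimensional K Λ] {Y : Mdl Λ}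
    (c : Copres Y) (hY : c.Lifts Y) : CovFin Λ (perpTauInv Λ Y) := by
  intro M hM
  have := artinian_of_fd K Λ
  obtain ⟨r, U, i, π, hU, hUl, -, -, happ, -⟩ := univ_ext K c hY M hM
  exact ⟨U, (mem_perp c U).2 ⟨hU, hUl⟩, π, fun C hC f => happ C ((mem_perp c C).1 hC).2 f⟩

end FiniteHom

/-! ### The heart of `[Cogen Z, (τ⁻¹Z)^⊥]` and its simple objects -/

section Heart

lemma mem_perpL_cogen {Z M : Mdl Λ} [IsNoetherianRing Λ] (hZ : Module.Finite Λ Z) :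
    M ∈ perpL Λ (Cogen Λ Z) ↔ Module.Finite Λ M ∧ ∀ f : M →ₗ[Λ] Z, f = 0 := by
  constructor
  · rintro ⟨hM, h⟩
    exact ⟨hM, h Z (mem_cogen.2 ⟨hZ, 1, LinearMap.pi fun _ => LinearMap.id,
      fun _ _ hxy => congrFun hxy 0⟩)⟩
  · rintro ⟨hM, h⟩
    refine ⟨hM, fun X hX f => LinearMap.ext fun x => ?_⟩
    obtain ⟨-, n, u, hu⟩ := mem_cogen.1 hX
    apply hu
    rw [LinearMap.zero_apply, map_zero]
    ext i
    exact LinearMap.congr_fun (h (LinearMap.proj i ∘ₗ u ∘ₗ f)) x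

lemma perpL_surj {C : Set (Mdl Λ)} {A B : Mdl Λ} (hA : A ∈ perpL Λ C) (g : A →ₗ[Λ] B)
    (hg : Surjective g) : B ∈ perpL Λ C := by
  have := hA.1
  refine ⟨Module.Finite.of_surjective g hg, fun X hX f => ?_⟩
  have h := hA.2 X hX (f ∘ₗ g)
  ext x
  obtain ⟨y, rfl⟩ := hg x
  exact LinearMap.congr_fun h y

variable [IsArtinianRing Λ] {Z : Mdl Λ} (c : Copres Z) (hZ : Module.Finite Λ Z)

include c hZ

/-- The heart `(τ⁻¹Z)^⊥ ∩ ⊥Z` is closed under kernels. -/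
lemma heart_ker {A B : Mdl Λ} (hA : A ∈ heart Λ (Cogen Λ Z) (perpTauInv Λ Z))
    (hB : B ∈ perpTauInv Λ Z) (f : A →ₗ[Λ] B) :
    ModuleCat.of Λ (LinearMap.ker f) ∈ heart Λ (Cogen Λ Z) (perpTauInv Λ Z) := by
  have hT := isTorf_perp c
  have hK : ModuleCat.of Λ (LinearMap.ker f) ∈ perpTauInv Λ Z :=
    torf_sub hT hA.1 (LinearMap.ker f).subtype (Submodule.injective_subtype _)
  refine ⟨hK, (mem_perpL_cogen hZ).2 ⟨hK.1, fun φ => ?_⟩⟩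
  have hR : ModuleCat.of Λ (LinearMap.range f) ∈ perpTauInv Λ Z :=
    torf_sub hT hB (LinearMap.range f).subtype (Submodule.injective_subtype _)
  obtain ⟨ψ, hψ⟩ := ext1_extend c (A := ModuleCat.of Λ (LinearMap.ker f)) (perp_ext1 hR)
    (LinearMap.ker f).subtype f.rangeRestrict
    ⟨Submodule.injective_subtype _, f.surjective_rangeRestrict, by
      rw [Submodule.range_subtype, LinearMap.ker_rangeRestrict]⟩ φ
  rw [((mem_perpL_cogen hZ).1 hA.2).2 ψ] at hψ
  exact hψ.symm.trans (LinearMap.zero_comp _)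

/-- The heart `(τ⁻¹Z)^⊥ ∩ ⊥Z` is closed under cokernels of monomorphisms. -/
lemma heart_quot {A : Mdl Λ} (hA : A ∈ heart Λ (Cogen Λ Z) (perpTauInv Λ Z))
    (L : Submodule Λ A) (hL : ModuleCat.of Λ L ∈ perpL Λ (Cogen Λ Z)) :
    ModuleCat.of Λ (A ⧸ L) ∈ heart Λ (Cogen Λ Z) (perpTauInv Λ Z) := by
  have h1 : ModuleCat.of Λ (A ⧸ L) ∈ perpL Λ (Cogen Λ Z) :=
    perpL_surj hA.2 L.mkQ L.mkQ_surjective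
  refine ⟨(mem_perp c _).2 ⟨h1.1, fun f => ?_⟩, h1⟩
  obtain ⟨g, hg⟩ := ((mem_perp c A).1 hA.1).2 (f ∘ₗ L.mkQ)
  have hg' : ∀ x, c.q (g x) = f (L.mkQ x) := fun x => LinearMap.congr_fun hg x
  have hmk : ∀ x ∈ L, L.mkQ x = 0 := fun x hx => (Submodule.Quotient.mk_eq_zero L).2 hx
  obtain ⟨k, hk⟩ := c.factor (g ∘ₗ L.subtype) (fun x => by
    rw [LinearMap.comp_apply, hg', Submodule.subtype_apply, hmk _ x.2, map_zero])
  rw [((mem_perpL_cogen hZ).1 hL).2 k, LinearMap.comp_zero] at hk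
  obtain ⟨h, hh⟩ := factor_surj L.mkQ L.mkQ_surjective g (fun x hx =>
    (LinearMap.congr_fun hk.symm ⟨x, (Submodule.Quotient.mk_eq_zero L).1 hx⟩))
  refine ⟨h, LinearMap.ext fun x => ?_⟩
  obtain ⟨y, rfl⟩ := L.mkQ_surjective x
  have h2 : h (L.mkQ y) = g y := LinearMap.congr_fun hh y
  rw [LinearMap.comp_apply, h2, hg']

/-- If `M` is a simple object of the heart `W` of `[F, G]`, where `F = Cogen Z` and
`G = (τ⁻¹Z)^⊥`, then the torsion-free class generated by `F` and `M` covers `F`. -/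
lemma covers_of_simple (hr : TauInvRigid Λ Z) {M : Mdl Λ}
    (hM : M ∈ heart Λ (Cogen Λ Z) (perpTauInv Λ Z)) (hne : ¬ Subsingleton M)
    (hsimple : ∀ L : Submodule Λ M, ModuleCat.of Λ L ∈ heart Λ (Cogen Λ Z) (perpTauInv Λ Z) →
      L = ⊥ ∨ L = ⊤) :
    CoversIn Λ (modAll Λ) (⋂₀ {C | IsTorf Λ C ∧ Cogen Λ Z ⊆ C ∧ M ∈ C}) (Cogen Λ Z) ∧
    (⋂₀ {C | IsTorf Λ C ∧ Cogen Λ Z ⊆ C ∧ M ∈ C}) ⊆ perpTauInv Λ Z := by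
  set F := Cogen Λ Z with hF
  set G := perpTauInv Λ Z with hG
  have hTF : IsTorf Λ F := isTorf_cogen c hr
  have hTG : IsTorf Λ G := isTorf_perp c
  have hFG : F ⊆ G := fun A hA => ⟨hA.1, fun N hN => hr.2 N (by
    obtain ⟨hNfin, n, u, hu⟩ := mem_cogen.1 hN
    exact torf_sub hTF (torf_pi hTF hA n) u hu)⟩
  -- The class `D` is torsion-free and contains `F` and `M`; it detects `M` inside torsion objects.
  let D : Set (Mdl Λ) := {E | E ∈ G ∧ ∀ L : Mdl Λ, L ∈ perpL Λ F → ¬ Subsingleton L →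
    ∀ ι : L →ₗ[Λ] E, Injective ι → ∃ f : M →ₗ[Λ] L, f ≠ 0}
  have hFM : M ∉ F := fun h => hne ⟨fun x y => by
    have h0 := hM.2.2 M h LinearMap.id
    exact (LinearMap.congr_fun h0 x).trans (LinearMap.congr_fun h0 y).symm⟩
  have hTD : IsTorf Λ D := by
    refine ⟨fun E hE => hE.1.1, ⟨ModuleCat.of Λ PUnit, ⟨torf_zero hTG
      (inferInstanceAs (Subsingleton PUnit)), fun L _ hL ι hι => (hL ⟨fun x y => hι rfl⟩).elim⟩,
      inferInstanceAs (Subsingleton PUnit)⟩, ?_, ?_⟩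
    · intro A E B u v hs hA hB hE
      have hEG : E ∈ G := torf_ext hTG hA.1 hB.1 u v hs
      refine ⟨hEG, fun L hL hL0 ι hι => ?_⟩
      have hLW : L ∈ heart Λ F G := ⟨torf_sub hTG hEG ι hι, hL⟩
      have hK := heart_ker c hZ hLW hB.1 (v ∘ₗ ι)
      by_cases hk : Subsingleton (LinearMap.ker (v ∘ₗ ι))
      · refine hB.2 L hL hL0 (v ∘ₗ ι) (LinearMap.ker_eq_bot.1 ?_)
        exact (Submodule.subsingleton_iff_eq_bot).1 hk
      · obtain ⟨w, hw⟩ : ∃ w : LinearMap.ker (v ∘ₗ ι) →ₗ[Λ] A,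
            u ∘ₗ w = ι ∘ₗ (LinearMap.ker (v ∘ₗ ι)).subtype := by
          have hr : ∀ x : LinearMap.ker (v ∘ₗ ι), ι x ∈ LinearMap.range u := fun x => by
            rw [hs.2.2]; exact x.2
          refine ⟨(LinearEquiv.ofInjective u hs.1).symm.toLinearMap ∘ₗ
            (ι ∘ₗ (LinearMap.ker (v ∘ₗ ι)).subtype).codRestrict _ hr, LinearMap.ext fun x => ?_⟩
          exact congrArg Subtype.val
            ((LinearEquiv.ofInjective u hs.1).apply_symm_apply ⟨ι x, hr x⟩)
        have hwi : Injective w := fun x y hxy => Subtype.ext (hι (by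
          have h1 : u (w x) = ι x := LinearMap.congr_fun hw x
          have h2 : u (w y) = ι y := LinearMap.congr_fun hw y
          rw [← h1, ← h2, hxy]))
        obtain ⟨f, hf⟩ := hA.2 (ModuleCat.of Λ (LinearMap.ker (v ∘ₗ ι))) hK.2 hk w hwi
        refine ⟨(LinearMap.ker (v ∘ₗ ι)).subtype ∘ₗ f, fun h0 => hf ?_⟩
        exact LinearMap.ext fun x => Subtype.ext (LinearMap.congr_fun h0 x)
    · rintro A E hA hE ⟨u, hu⟩
      exact ⟨torf_sub hTG hE.1 u hu, fun L hL hL0 ι hι =>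
        hE.2 L hL hL0 (u ∘ₗ ι) (hu.comp hι)⟩
  have hFD : F ⊆ D := fun E hE => ⟨hFG hE, fun L hL hL0 ι hι => (hL0 ⟨fun x y => by
    have h0 := hL.2 L (torf_sub hTF hE ι hι) LinearMap.id
    exact (LinearMap.congr_fun h0 x).trans (LinearMap.congr_fun h0 y).symm⟩).elim⟩
  have hMD : M ∈ D := by
    refine ⟨hM.1, fun L hL hL0 ι hι => ?_⟩
    have hR : ModuleCat.of Λ (LinearMap.range ι) ∈ heart Λ F G :=
      ⟨torf_sub hTG hM.1 (LinearMap.range ι).subtype (Submodule.injective_subtype _),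
        perpL_surj hL ι.rangeRestrict ι.surjective_rangeRestrict⟩
    rcases hsimple _ hR with h | h
    · rw [LinearMap.range_eq_bot] at h
      exact (hL0 ⟨fun x y => hι (by rw [h]; rfl)⟩).elim
    · let e := LinearEquiv.ofBijective ι ⟨hι, LinearMap.range_eq_top.1 h⟩
      refine ⟨e.symm.toLinearMap, fun h0 => hne ⟨fun x y => e.symm.injective ?_⟩⟩
      exact (LinearMap.congr_fun h0 x).trans (LinearMap.congr_fun h0 y).symm
  set F' := ⋂₀ {C | IsTorf Λ C ∧ F ⊆ C ∧ M ∈ C} with hF'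
  have hFF' : F ⊆ F' := fun A hA C hC => hC.2.1 hA
  have hMF' : M ∈ F' := fun C hC => hC.2.2
  have hF'D : F' ⊆ D := fun A hA => hA D ⟨hTD, hFD, hMD⟩
  refine ⟨⟨hTF, torf_sInter ⟨D, hTD, hFD, hMD⟩ fun C hC => hC.1, ⟨hFF', fun h => hFM (h hMF')⟩,
    fun F1 hT1 hF1 hF1' => ?_⟩, fun A hA => (hF'D hA).1⟩
  refine hF1'.antisymm fun A hA => hA F1 ⟨hT1, hF1.1, ?_⟩
  -- An object of `F1` outside `F` has a nonzero torsion part, which contains a copy of `M`.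
  obtain ⟨N, hN1, hNF⟩ := Set.not_subset.1 hF1.2
  obtain ⟨t, ht, ht'⟩ := torf_torsion hTF N (torf_fin hT1 hN1)
  have ht1 : ModuleCat.of Λ t ∈ F1 := torf_sub hT1 hN1 t.subtype (Submodule.injective_subtype _)
  have ht0 : ¬ Subsingleton t := fun h => hNF
    (torf_ext_sub hTF t (torf_zero hTF (M := ModuleCat.of Λ t) h) ht)
  obtain ⟨f, hf⟩ := (hF'D (hF1' ht1)).2 (ModuleCat.of Λ t) ht' ht0 LinearMap.id fun _ _ h => h
  have hfi : Injective f := by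
    rcases hsimple _ (heart_ker c hZ hM (hF'D (hF1' ht1)).1 f) with h | h
    · exact LinearMap.ker_eq_bot.1 h
    · exact (hf (LinearMap.ker_eq_top.1 h)).elim
  exact torf_sub hT1 ht1 f hfi

/-- `(τ⁻¹Z)^⊥` is contained in every torsion-free class containing `Cogen Z` and all covers of
`Cogen Z` inside `(τ⁻¹Z)^⊥`. -/
lemma perp_le_of_covers (hr : TauInvRigid Λ Z) {H : Set (Mdl Λ)} (hH : IsTorf Λ H)
    (hFH : Cogen Λ Z ⊆ H) (hcov : ∀ F', CoversIn Λ (modAll Λ) F' (Cogen Λ Z) →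
      F' ⊆ perpTauInv Λ Z → F' ⊆ H) : perpTauInv Λ Z ⊆ H := by
  have hTF : IsTorf Λ (Cogen Λ Z) := isTorf_cogen c hr
  have hTG : IsTorf Λ (perpTauInv Λ Z) := isTorf_perp c
  by_contra hcon
  obtain ⟨M0, hM0, hM0H⟩ := Set.not_subset.1 hcon
  obtain ⟨t, ht, ht'⟩ := torf_torsion hTF M0 hM0.1
  obtain ⟨M, ⟨hMW, hMH⟩, hmin⟩ := WellFounded.has_min
    (InvImage.wf (fun M : Mdl Λ => Module.length Λ M) (wellFounded_lt (α := ℕ∞)))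
    {M | M ∈ heart Λ (Cogen Λ Z) (perpTauInv Λ Z) ∧ M ∉ H}
    ⟨ModuleCat.of Λ t, ⟨torf_sub hTG hM0 t.subtype (Submodule.injective_subtype _), ht'⟩,
      fun h => hM0H (torf_ext_sub hH t h (hFH ht))⟩
  have hfin : Module.Finite Λ M := hMW.1.1
  obtain ⟨hc, hle⟩ := covers_of_simple c hZ hr hMW (fun h => hMH (torf_zero hH h)) (by
    intro L hL
    by_contra! hL'
    have h1 : ModuleCat.of Λ L ∈ H := by
      by_contra h
      exact hmin _ ⟨hL, h⟩ (Submodule.length_lt hL'.2)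
    have h2 : ModuleCat.of Λ (M ⧸ L) ∈ H := by
      by_contra h
      have : Nontrivial L := Submodule.nontrivial_iff_ne_bot.2 hL'.1
      refine hmin _ ⟨heart_quot c hZ hMW L hL.2, h⟩ (Submodule.length_quotient_lt L ?_)
      exact hL'.1
    exact hMH (torf_ext_sub hH L h1 h2))
  exact hMH (hcov _ hc hle fun C hC => hC.2.2)

end Heart

/-! ### Split injectives and covers -/

section SplitInjectives

/-- The cokernel of a monomorphism `Y^r → U` in a torsion-free class stays in the class when `Y` is
split injective. -/
lemma splitInj_quot [IsNoetherianRing Λ] {C : Set (Mdl Λ)} (hC : IsTorf Λ C) {Y M : Mdl Λ}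
    (hY : SplitInjIn Λ C Y) : ∀ (r : ℕ) (U : Mdl Λ) (_ : U ∈ C) (i : (Fin r → Y) →ₗ[Λ] U)
    (g : U →ₗ[Λ] M), Injective i → Surjective g → LinearMap.range i = LinearMap.ker g → M ∈ C := by
  intro r
  induction r with
  | zero =>
    intro U hU i g hi hg hig
    have hinj : Injective g := by
      rw [← LinearMap.ker_eq_bot, ← hig, LinearMap.range_eq_bot]
      exact LinearMap.ext fun x => by rw [Subsingleton.elim x 0, map_zero, map_zero]
    let e := LinearEquiv.ofBijective g ⟨hinj, hg⟩
    exact torf_sub hC hU e.symm.toLinearMap e.symm.injective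
  | succ r ih =>
    intro U hU i g hi hg hig
    let s : Y →ₗ[Λ] U := i ∘ₗ LinearMap.single Λ (fun _ : Fin (r + 1) => Y) 0
    let k : (Fin r → Y) →ₗ[Λ] (Fin (r + 1) → Y) :=
      LinearMap.pi (Fin.cons 0 fun i => LinearMap.proj i)
    have hk0 : ∀ y, k y 0 = 0 := fun y => by simp [k]
    have hks : ∀ y j, k y (Fin.succ j) = y j := fun y j => by simp [k]
    have hdec : ∀ y : Fin (r + 1) → Y, y = Pi.single 0 (y 0) + k (fun j => y j.succ) := fun y => by
      ext j
      refine Fin.cases ?_ (fun j => ?_) j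
      · simp [hk0]
      · simp [hks]
    obtain ⟨ρ, hρ⟩ := hY.2 U hU s fun x y h => by
      have := congrFun (hi h) 0
      simpa using this
    have hρs : ∀ y, ρ (s y) = y := fun y => LinearMap.congr_fun hρ y
    have hgi : ∀ y, g (i y) = 0 := fun y => by
      have : i y ∈ LinearMap.ker g := hig ▸ LinearMap.mem_range_self _ _
      exact this
    -- Split off the first copy of `Y` and continue with the complement `ker ρ`.
    let p : U →ₗ[Λ] LinearMap.ker ρ := (LinearMap.id - s ∘ₗ ρ).codRestrict _ fun x => by
      simp [hρs]
    have hp : ∀ x, (p x : U) = x - s (ρ x) := fun x => rfl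
    have hps : ∀ y, p (s y) = 0 := fun y => Subtype.ext (by rw [hp, hρs, sub_self]; rfl)
    refine ih (ModuleCat.of Λ (LinearMap.ker ρ))
      (torf_sub hC hU (LinearMap.ker ρ).subtype (Submodule.injective_subtype _))
      (p ∘ₗ i ∘ₗ k) (g ∘ₗ (LinearMap.ker ρ).subtype) ?_ ?_ ?_
    · rw [← LinearMap.ker_eq_bot, LinearMap.ker_eq_bot']
      intro y hy
      have h1 : i (k y) - s (ρ (i (k y))) = 0 := congrArg Subtype.val hy
      have h2 : k y = Pi.single 0 (ρ (i (k y))) := hi (sub_eq_zero.1 h1)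
      ext j
      rw [← hks y j, h2]
      simp
    · intro m
      obtain ⟨u, rfl⟩ := hg m
      refine ⟨p u, ?_⟩
      change g (u - s (ρ u)) = g u
      rw [map_sub, sub_eq_self]
      exact hgi _
    · ext x
      constructor
      · rintro ⟨y, rfl⟩
        change g (i (k y) - s (ρ (i (k y)))) = 0
        rw [map_sub, hgi, zero_sub, neg_eq_zero]
        exact hgi _
      · intro hx
        have hx' : (x : U) ∈ LinearMap.range i := by rw [hig]; exact hx
        obtain ⟨y, hy⟩ := hx'
        refine ⟨fun j => y j.succ, ?_⟩
        have h1 : p x = x := Subtype.ext (by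
          rw [hp, show ρ x = 0 from x.2, map_zero, sub_zero])
        rw [← h1, ← hy, hdec y, map_add, map_add]
        have h2 : p (i (Pi.single 0 (y 0))) = 0 := hps (y 0)
        rw [h2, zero_add]
        simp [hks]

/-- If `F ⊆ (τ⁻¹Y)^⊥` and `Y` is split injective in `F`, then every cover of `F` lies in
`(τ⁻¹Y)^⊥`. -/
lemma covers_le_perp (K : Type) [Field K] [Algebra K Λ] [FiniteDimensional K Λ]
    {F F' : Set (Mdl Λ)} {Y : Mdl Λ} (c : Copres Y) (hY : SplitInjIn Λ F Y)
    (hF : F ⊆ perpTauInv Λ Y) (hc : CoversIn Λ (modAll Λ) F' F) : F' ⊆ perpTauInv Λ Y := by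
  have := artinian_of_fd K Λ
  obtain ⟨hTF, hTF', hlt, hcov⟩ := hc
  have hTG : IsTorf Λ (perpTauInv Λ Y) := isTorf_perp c
  by_contra hcon
  have hFi : F = F' ∩ perpTauInv Λ Y := by
    by_contra hne
    have h := hcov _ (torf_inter hTF' hTG)
      ((Set.subset_inter hlt.1 hF).ssubset_of_ne hne) Set.inter_subset_left
    exact hcon (Set.inter_eq_left.1 h)
  obtain ⟨M, ⟨hMF', hMF⟩, hmin⟩ := WellFounded.has_min
    (InvImage.wf (fun M : Mdl Λ => Module.length Λ M) (wellFounded_lt (α := ℕ∞)))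
    (F' \ F) (Set.nonempty_of_ssubset hlt)
  have hfin : Module.Finite Λ M := torf_fin hTF' hMF'
  obtain ⟨r, U, i, π, hU, hUl, hi, hiπ, -, hsurj⟩ :=
    univ_ext K c ((mem_perp c Y).1 (hF hY.1)).2 M hfin
  -- Proper submodules of `M` lie in `F`, so every `M → I₁` has image in that of `I₀`.
  have hπ : Surjective π := fun x => hsurj x fun f => by
    by_cases htop : (LinearMap.range c.q).comap f = ⊤
    · have : x ∈ (LinearMap.range c.q).comap f := htop ▸ Submodule.mem_top
      exact this
    · have hN : ModuleCat.of Λ ((LinearMap.range c.q).comap f) ∈ F := by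
        by_contra h
        exact hmin _ ⟨torf_sub hTF' hMF' (Submodule.subtype _) (Submodule.injective_subtype _), h⟩
          (Submodule.length_lt htop)
      obtain ⟨g, rfl⟩ := c.lift_of_preimage f (((mem_perp c _).1 (hF hN)).2 _)
      exact LinearMap.mem_range_self _ _
  have hUF : U ∈ F := by
    rw [hFi]
    exact ⟨torf_ext hTF' (torf_pi hTF' (hlt.1 hY.1) r) hMF' i π ⟨hi, hπ, hiπ⟩,
      (mem_perp c U).2 ⟨hU, hUl⟩⟩
  exact hMF (splitInj_quot hTF hY r U hUF i π hi hπ hiπ)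

end SplitInjectives

/-! ### Indecomposable modules and deletion of summands -/

section Indecomposables

/-- Fitting's lemma: a non-injective endomorphism of an indecomposable module is nilpotent. -/
lemma indec_nilpotent [IsArtinianRing Λ] {Y : Mdl Λ} (hY : Module.Finite Λ Y) (hind : Indec Λ Y)
    (b : Module.End Λ Y) (hb : ¬ Injective b) : ∃ n, b ^ n = 0 := by
  obtain ⟨N, hN⟩ := Filter.eventually_atTop.1 b.eventually_isCompl_ker_pow_range_pow
  have hc := hN (N + 1) (Nat.le_succ N)
  refine ⟨N + 1, ?_⟩
  have e := (Submodule.prodEquivOfIsCompl _ _ hc).symm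
  rcases hind.2 (ModuleCat.of Λ (LinearMap.ker (b ^ (N + 1))))
    (ModuleCat.of Λ (LinearMap.range (b ^ (N + 1)))) ⟨e⟩ with h | h
  · refine (hb ?_).elim
    have h1 : LinearMap.ker (b ^ (N + 1)) = ⊥ := (Submodule.subsingleton_iff_eq_bot).1 h
    rw [LinearMap.ker_eq_bot] at h1
    refine fun x y hxy => h1 ?_
    rw [pow_succ]
    exact congrArg (b ^ N) hxy
  · exact LinearMap.range_eq_bot.1 ((Submodule.subsingleton_iff_eq_bot).1 h)

/-- If a condition `P` stable under endomorphisms of an indecomposable `Y` holds at some nonzero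
element, then it holds at a nonzero element killed by all non-injective endomorphisms: take one
generating a simple `End Y`-submodule. -/
lemma exists_socle_elem (K : Type) [Field K] [Algebra K Λ] [FiniteDimensional K Λ] {Y : Mdl Λ}
    (hY : Module.Finite Λ Y) (hind : Indec Λ Y) (P : Y → Prop)
    (hP : ∀ (b : Y →ₗ[Λ] Y) x, P x → P (b x)) (hne : ∃ x, x ≠ 0 ∧ P x) :
    ∃ x, x ≠ 0 ∧ P x ∧ ∀ b : Y →ₗ[Λ] Y, ¬ Injective b → b x = 0 := by
  have := artinian_of_fd K Λ
  have hart : IsArtinian (Module.End Λ Y) Y := by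
    let : Module K Y := Module.compHom Y (algebraMap K Λ)
    have : IsScalarTower K Λ Y := ⟨fun c a x => by rw [Algebra.smul_def, mul_smul]; rfl⟩
    have : SMulCommClass Λ K Y := IsScalarTower.to_smulCommClass'
    have : Module.Finite K Y := Module.Finite.trans Λ Y
    have : IsScalarTower K (Module.End Λ Y) Y := ⟨fun c a x => rfl⟩
    exact isArtinian_of_tower K inferInstance
  obtain ⟨x, ⟨hx0, hxP⟩, hmin⟩ := WellFounded.has_min
    (InvImage.wf (fun x : Y => Submodule.span (Module.End Λ Y) {x})
      (wellFounded_lt (α := Submodule (Module.End Λ Y) Y))) {x | x ≠ 0 ∧ P x} hne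
  refine ⟨x, hx0, hxP, fun b hb => by_contra fun hbx => ?_⟩
  have hle : Submodule.span (Module.End Λ Y) {b x} ≤ Submodule.span (Module.End Λ Y) {x} := by
    rw [Submodule.span_singleton_le_iff_mem]
    exact Submodule.mem_span_singleton.2 ⟨b, rfl⟩
  have hmem : x ∈ Submodule.span (Module.End Λ Y) {b x} := by
    by_contra h
    exact hmin (b x) ⟨hbx, hP b x hxP⟩
      (lt_of_le_not_ge hle fun h' => h (h' (Submodule.mem_span_singleton_self x)))
  obtain ⟨r, hr⟩ := Submodule.mem_span_singleton.1 hmem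
  have hr' : (r * b) x = x := hr
  obtain ⟨n, hn⟩ := indec_nilpotent hY hind (r * b) fun h => hb (Injective.of_comp (f := r) h)
  have hpow : ∀ n, ((r * b) ^ n) x = x := fun n => by
    induction n with
    | zero => rfl
    | succ n ih => rw [pow_succ, Module.End.mul_apply, hr', ih]
  exact hx0 (by rw [← hpow n, hn]; rfl)

/-- A module separated by its maps to `W` is cogenerated by `W`. -/
lemma mem_cogen_of_separated [IsArtinianRing Λ] {Y W : Mdl Λ} (hY : Module.Finite Λ Y)
    (h : ∀ x : Y, (∀ g : Y →ₗ[Λ] W, g x = 0) → x = 0) : Y ∈ Cogen Λ W := by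
  obtain ⟨_, ⟨n, f, rfl⟩, hmin⟩ := WellFounded.has_min (wellFounded_lt (α := Submodule Λ Y))
    {N | ∃ (n : ℕ) (f : Y →ₗ[Λ] (Fin n → W)), N = LinearMap.ker f} ⟨_, 0, 0, rfl⟩
  refine mem_cogen.2 ⟨hY, n, f, ?_⟩
  rw [← LinearMap.ker_eq_bot, Submodule.eq_bot_iff]
  refine fun x hx => h x fun g => by_contra fun hg => ?_
  let f' : Y →ₗ[Λ] (Fin (n + 1) → W) := LinearMap.pi (Fin.cons g fun i => LinearMap.proj i ∘ₗ f)
  have h0 : ∀ y, f' y 0 = g y := fun y => by simp [f']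
  have hs : ∀ y i, f' y (Fin.succ i) = f y i := fun y i => by simp [f']
  refine hmin _ ⟨n + 1, f', rfl⟩ (lt_of_le_of_ne (fun y hy => ?_) fun he => ?_)
  · ext i
    rw [← hs, LinearMap.mem_ker.1 hy]; rfl
  · have : x ∈ LinearMap.ker f' := he ▸ hx
    exact hg (by rw [← h0, LinearMap.mem_ker.1 this]; rfl)

/-- An indecomposable `Y` in `Cogen Z` which is not cogenerated by the complement `W` of the
`Y`-summands of `Z` is split injective in `Cogen Z`. -/
lemma splitInj_of_not_cogen (K : Type) [Field K] [Algebra K Λ] [FiniteDimensional K Λ]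
    {Y Z W Z' : Mdl Λ} (hind : Indec Λ Y) (hYZ : Y ∈ Cogen Λ Z)
    (hYW : Y ∉ Cogen Λ W) (e : Z ≃ₗ[Λ] (W × Z')) (hZ' : Z' ∈ addOf Λ Y) :
    SplitInjIn Λ (Cogen Λ Z) Y := by
  have := artinian_of_fd K Λ
  have hY : Module.Finite Λ Y := hYZ.1
  refine ⟨hYZ, fun M hM f hf => by_contra fun hno => ?_⟩
  obtain ⟨x, hx0, hxW, hxb⟩ := exists_socle_elem K hY hind
    (fun x => ∀ g : Y →ₗ[Λ] W, g x = 0) (fun b x hx g => hx (g ∘ₗ b)) (by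
      by_contra! hcon
      exact hYW (mem_cogen_of_separated hY fun x hx => by_contra fun h0 => by
        obtain ⟨g, hg⟩ := hcon x h0
        exact hg (hx g)))
  have hφ : ∀ φ : M →ₗ[Λ] Y, φ (f x) = 0 := fun φ => hxb (φ ∘ₗ f) fun hinj => by
    let u := LinearEquiv.ofBijective (φ ∘ₗ f)
      ⟨hinj, IsArtinian.surjective_of_injective_endomorphism _ hinj⟩
    exact hno ⟨u.symm.toLinearMap ∘ₗ φ, LinearMap.ext fun y => u.symm_apply_apply y⟩
  obtain ⟨-, n, ι, hι⟩ := mem_cogen.1 hM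
  obtain ⟨p, i, r, hri⟩ := hZ'
  have hi : Injective i := fun a b hab => by
    have h := congrArg r hab
    have h1 : ∀ z, r (i z) = z := fun z => LinearMap.congr_fun hri z
    simpa [h1] using h
  apply hx0
  apply hf
  apply hι
  rw [map_zero, map_zero]
  ext j
  apply e.injective
  rw [Pi.zero_apply, map_zero]
  refine Prod.ext ?_ (hi ?_)
  · exact hxW (LinearMap.fst Λ W Z' ∘ₗ e.toLinearMap ∘ₗ LinearMap.proj j ∘ₗ ι ∘ₗ f)
  · rw [Prod.snd_zero, map_zero]
    ext t
    exact hφ (LinearMap.proj t ∘ₗ i ∘ₗ LinearMap.snd Λ W Z' ∘ₗ e.toLinearMap ∘ₗ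
      LinearMap.proj j ∘ₗ ι)

lemma isSummand_trans {A B C : Mdl Λ} (h : IsSummand Λ A B) (h' : IsSummand Λ B C) :
    IsSummand Λ A C := by
  obtain ⟨i, p, hp⟩ := h
  obtain ⟨i', p', hp'⟩ := h'
  refine ⟨i' ∘ₗ i, p ∘ₗ p', LinearMap.ext fun x => ?_⟩
  have h1 : p' (i' (i x)) = i x := LinearMap.congr_fun hp' _
  have h2 : p (i x) = x := LinearMap.congr_fun hp _
  simp [h1, h2]

lemma addOf_summand {Y A B : Mdl Λ} (h : IsSummand Λ A B) (hB : B ∈ addOf Λ Y) :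
    A ∈ addOf Λ Y := by
  obtain ⟨n, hn⟩ := hB
  exact ⟨n, isSummand_trans h hn⟩

lemma addOf_prod {Y A B : Mdl Λ} (hA : A ∈ addOf Λ Y) (hB : B ∈ addOf Λ Y) :
    dsum Λ A B ∈ addOf Λ Y := by
  obtain ⟨a, i, p, hp⟩ := hA
  obtain ⟨b, i', p', hp'⟩ := hB
  have h1 : ∀ x, p (i x) = x := fun x => LinearMap.congr_fun hp x
  have h2 : ∀ x, p' (i' x) = x := fun x => LinearMap.congr_fun hp' x
  refine ⟨a + b, LinearMap.pi (Fin.addCases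
      (fun j => LinearMap.proj j ∘ₗ i ∘ₗ LinearMap.fst Λ A B)
      (fun j => LinearMap.proj j ∘ₗ i' ∘ₗ LinearMap.snd Λ A B)),
    (p ∘ₗ LinearMap.funLeft Λ Y (Fin.castAdd b)).prod
      (p' ∘ₗ LinearMap.funLeft Λ Y (Fin.natAdd a)), LinearMap.ext fun x => ?_⟩
  refine Prod.ext ?_ ?_
  · refine Eq.trans (congrArg p (funext fun j => ?_)) (h1 x.1)
    simp [LinearMap.funLeft]
    rfl
  · refine Eq.trans (congrArg p' (funext fun j => ?_)) (h2 x.2)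
    simp [LinearMap.funLeft]
    rfl

/-- A summand `V` of `W` splits off, with complement the kernel of the projection. -/
def splitEquiv {V W : Type} [AddCommGroup V] [Module Λ V] [AddCommGroup W] [Module Λ W]
    (i : V →ₗ[Λ] W) (p : W →ₗ[Λ] V) (hp : p ∘ₗ i = LinearMap.id) :
    W ≃ₗ[Λ] (LinearMap.ker p × V) where
  toFun x := (⟨x - i (p x), by
    have h : p (i (p x)) = p x := LinearMap.congr_fun hp _
    simp [h]⟩, p x)
  map_add' x y := by
    refine Prod.ext (Subtype.ext ?_) (map_add p x y)
    simp only [map_add, Prod.mk_add_mk, AddMemClass.mk_add_mk]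
    abel
  map_smul' a x := by
    refine Prod.ext (Subtype.ext ?_) (map_smul p a x)
    simp [smul_sub]
  invFun z := z.1 + i z.2
  left_inv x := by simp
  right_inv z := by
    have h : p (i z.2) = z.2 := LinearMap.congr_fun hp _
    refine Prod.ext (Subtype.ext ?_) ?_ <;> simp [h]

/-- All summands in `add Y` can be deleted from a finitely generated module. -/
lemma exists_deleted [IsArtinianRing Λ] {Z Y : Mdl Λ} (hZ : Module.Finite Λ Z) :
    ∃ W Z' : Mdl Λ, IsDeleted Λ Z (addOf Λ Y) W ∧ Nonempty (Z ≃ₗ[Λ] (W × Z')) ∧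
      Z' ∈ addOf Λ Y := by
  obtain ⟨W, ⟨Z', ⟨e⟩, hZ'⟩, hmin⟩ := WellFounded.has_min
    (InvImage.wf (fun M : Mdl Λ => Module.length Λ M) (wellFounded_lt (α := ℕ∞)))
    {W : Mdl Λ | ∃ Z' : Mdl Λ, Nonempty (Z ≃ₗ[Λ] (W × Z')) ∧ Z' ∈ addOf Λ Y}
    ⟨Z, ModuleCat.of Λ PUnit, ⟨(splitEquiv (0 : PUnit →ₗ[Λ] Z) 0 (by ext)).trans
      (LinearEquiv.prodCongr ((LinearEquiv.ofEq _ _ LinearMap.ker_zero).trans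
        Submodule.topEquiv) (LinearEquiv.refl Λ PUnit))⟩, 0, 0, 0, by ext⟩
  refine ⟨W, Z', ⟨Z', ⟨e⟩, fun V _ hV => addOf_summand hV hZ', ?_⟩, ⟨e⟩, hZ'⟩
  intro V hV hVW hVY
  have hW : Module.Finite Λ W := Module.Finite.of_surjective (LinearMap.fst Λ W Z' ∘ₗ e.toLinearMap)
    ((LinearMap.fst_surjective (R := Λ) (M := W) (M₂ := Z')).comp e.surjective)
  obtain ⟨i, p, hp⟩ := hVW
  let e' : (W × Z') ≃ₗ[Λ] ((LinearMap.ker p × V) × Z') :=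
    LinearEquiv.prodCongr (splitEquiv i p hp) (LinearEquiv.refl Λ Z')
  refine hmin (ModuleCat.of Λ (LinearMap.ker p)) ⟨dsum Λ V Z',
    ⟨(e.trans e').trans (LinearEquiv.prodAssoc Λ (LinearMap.ker p) V Z')⟩, addOf_prod hVY hZ'⟩ (Submodule.length_lt fun htop => ?_)
  refine hV.1 ⟨fun x y => ?_⟩
  have h1 : ∀ x, p (i x) = x := fun x => LinearMap.congr_fun hp x
  rw [← h1 x, ← h1 y, LinearMap.ker_eq_top.1 htop]
  rfl

end Indecomposables

/-! ### Direct summands -/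

section Summands

lemma ext1_of_retraction {A B E : Mdl Λ} {f : B →ₗ[Λ] E} {g : E →ₗ[Λ] A} (hs : IsSESeq Λ f g)
    (r : E →ₗ[Λ] B) (hr : r ∘ₗ f = LinearMap.id) : ∃ s : A →ₗ[Λ] E, g ∘ₗ s = LinearMap.id := by
  obtain ⟨-, hg, hfg⟩ := hs
  have hrf : ∀ b, r (f b) = b := fun b => LinearMap.congr_fun hr b
  have hgf : ∀ b, g (f b) = 0 := fun b => by
    have : f b ∈ LinearMap.ker g := hfg ▸ LinearMap.mem_range_self _ _
    exact this
  obtain ⟨s, hs⟩ := factor_surj g hg (LinearMap.id - f ∘ₗ r) (fun x hx => by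
    have : x ∈ LinearMap.range f := hfg ▸ hx
    obtain ⟨b, rfl⟩ := this
    simp [hrf])
  refine ⟨s, LinearMap.ext fun a => ?_⟩
  obtain ⟨x, rfl⟩ := hg a
  have h1 : s (g x) = x - f (r x) := LinearMap.congr_fun hs x
  simp [h1, hgf]

lemma ext1_summand {N A B : Mdl Λ} (c : Copres B) (hAB : IsSummand Λ A B) (h : Ext1Zero Λ N B) :
    Ext1Zero Λ N A := by
  obtain ⟨i, p, hp⟩ := hAB
  intro E f g hs
  obtain ⟨ψ, hψ⟩ := ext1_extend c h f g hs i
  exact ext1_of_retraction hs (p ∘ₗ ψ) (by rw [LinearMap.comp_assoc, hψ, hp])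

lemma ext1_prod {N A B : Mdl Λ} (cA : Copres A) (cB : Copres B) (hA : Ext1Zero Λ N A)
    (hB : Ext1Zero Λ N B) : Ext1Zero Λ N (dsum Λ A B) := by
  intro E f g hs
  obtain ⟨ψ, hψ⟩ := ext1_extend cA hA f g hs (LinearMap.fst Λ A B)
  obtain ⟨χ, hχ⟩ := ext1_extend cB hB f g hs (LinearMap.snd Λ A B)
  refine ext1_of_retraction hs (ψ.prod χ) (LinearMap.ext fun x => Prod.ext ?_ ?_)
  · exact LinearMap.congr_fun hψ x
  · exact LinearMap.congr_fun hχ x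

lemma finite_summand {A B : Mdl Λ} (h : IsSummand Λ A B) (hB : Module.Finite Λ B) :
    Module.Finite Λ A := by
  obtain ⟨i, p, hp⟩ := h
  exact Module.Finite.of_surjective p fun x => ⟨i x, LinearMap.congr_fun hp x⟩

lemma cogen_mono {A B : Mdl Λ} (h : IsSummand Λ A B) : Cogen Λ A ⊆ Cogen Λ B := by
  obtain ⟨i, p, hp⟩ := h
  intro M hM
  obtain ⟨hMf, n, f, hf⟩ := mem_cogen.1 hM
  refine mem_cogen.2 ⟨hMf, n, LinearMap.pi fun j => i ∘ₗ LinearMap.proj j ∘ₗ f,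
    fun x y hxy => hf (funext fun j => ?_)⟩
  have h := congrArg p (congrFun hxy j)
  have h1 : ∀ z, p (i z) = z := fun z => LinearMap.congr_fun hp z
  simpa [h1] using h

lemma perp_anti {A B : Mdl Λ} (c : Copres B) (h : IsSummand Λ A B) :
    perpTauInv Λ B ⊆ perpTauInv Λ A :=
  fun _ hM => ⟨hM.1, fun N hN => ext1_summand c h (hM.2 N hN)⟩

lemma rigid_summand {A B : Mdl Λ} (c : Copres B) (h : IsSummand Λ A B) (hB : TauInvRigid Λ B) :
    TauInvRigid Λ A :=
  ⟨finite_summand h hB.1, fun N hN => ext1_summand c h (hB.2 N (cogen_mono h hN))⟩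

/-- Vanishing of `Ext¹(N, V)` can be tested on the indecomposable summands of `V`. -/
lemma ext1_of_indec (K : Type) [Field K] [Algebra K Λ] [FiniteDimensional K Λ] {N : Mdl Λ} :
    ∀ V : Mdl Λ, Module.Finite Λ V →
      (∀ Y, Indec Λ Y → IsSummand Λ Y V → Ext1Zero Λ N Y) → Ext1Zero Λ N V := by
  have := artinian_of_fd K Λ
  intro V
  induction V using (InvImage.wf (fun M : Mdl Λ => Module.length Λ M)
    (wellFounded_lt (α := ℕ∞))).induction with
  | _ V ih =>
  intro hV h
  by_cases h0 : IsZeroM Λ V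
  · have h0' : Subsingleton V := h0
    exact fun E f g hs => ext1_of_retraction hs 0 (LinearMap.ext fun x => Subsingleton.elim _ _)
  by_cases hi : Indec Λ V
  · exact h V hi ⟨LinearMap.id, LinearMap.id, rfl⟩
  obtain ⟨A, B, ⟨e⟩, hA, hB⟩ : ∃ A B : Mdl Λ, IsoM Λ V (dsum Λ A B) ∧ ¬ IsZeroM Λ A ∧
      ¬ IsZeroM Λ B := by
    by_contra! hcon
    exact hi ⟨h0, fun A B hAB => or_iff_not_imp_left.2 (hcon A B hAB)⟩
  have hAV : IsSummand Λ A V := ⟨e.symm.toLinearMap ∘ₗ LinearMap.inl Λ A B,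
    LinearMap.fst Λ A B ∘ₗ e.toLinearMap, LinearMap.ext fun x =>
      congrArg Prod.fst (e.apply_symm_apply (x, 0))⟩
  have hBV : IsSummand Λ B V := ⟨e.symm.toLinearMap ∘ₗ LinearMap.inr Λ A B,
    LinearMap.snd Λ A B ∘ₗ e.toLinearMap, LinearMap.ext fun x =>
      congrArg Prod.snd (e.apply_symm_apply (0, x))⟩
  have hVAB : IsSummand Λ V (dsum Λ A B) := ⟨e.toLinearMap, e.symm.toLinearMap,
    LinearMap.ext fun x => e.symm_apply_apply x⟩
  have hAf := finite_summand hAV hV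
  have hBf := finite_summand hBV hV
  have hA' : Nontrivial A := not_subsingleton_iff_nontrivial.1 hA
  have hB' : Nontrivial B := not_subsingleton_iff_nontrivial.1 hB
  have hlen : Module.length Λ V = Module.length Λ A + Module.length Λ B := by
    rw [e.length_eq]; exact Module.length_prod Λ A B
  have hlA : Module.length Λ A ≠ ⊤ := Module.length_ne_top
  have hlB : Module.length Λ B ≠ ⊤ := Module.length_ne_top
  have hpA : 0 < Module.length Λ A := Module.length_pos
  have hpB : 0 < Module.length Λ B := Module.length_pos
  have h1 := ih A (by
    change Module.length Λ A < Module.length Λ V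
    rw [hlen, add_comm]; exact ENat.lt_add_left hlA hpB) hAf
    fun Y hY hYA => h Y hY (isSummand_trans hYA hAV)
  have h2 := ih B (by
    change Module.length Λ B < Module.length Λ V
    rw [hlen]; exact ENat.lt_add_left hlB hpA) hBf
    fun Y hY hYB => h Y hY (isSummand_trans hYB hBV)
  obtain ⟨cA⟩ := exists_copres K A hAf
  obtain ⟨cB⟩ := exists_copres K B hBf
  have hABf : Module.Finite Λ (dsum Λ A B) := inferInstanceAs (Module.Finite Λ (A × B))
  obtain ⟨c⟩ := exists_copres K (dsum Λ A B) hABf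
  exact ext1_summand c hVAB (ext1_prod cA cB h1 h2)

variable (X : ℕ → Mdl Λ)

/-- Restriction of `⊕_{a ≤ j ≤ m} X j` to the components with index at least `a'`. -/
def seqRes {a a' : ℕ} (h : a ≤ a') (m : ℕ) :
    ((j : Finset.Icc a m) → X j.1) →ₗ[Λ] ((j : Finset.Icc a' m) → X j.1) :=
  LinearMap.pi fun j => LinearMap.proj (⟨j.1, Finset.Icc_subset_Icc_left h j.2⟩ : Finset.Icc a m)

/-- Extension by zero of `⊕_{a' ≤ j ≤ m} X j` to lower indices. -/
def seqExt (a a' m : ℕ) :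
    ((j : Finset.Icc a' m) → X j.1) →ₗ[Λ] ((j : Finset.Icc a m) → X j.1) :=
  LinearMap.pi fun j =>
    if h : j.1 ∈ Finset.Icc a' m then LinearMap.proj (⟨j.1, h⟩ : Finset.Icc a' m) else 0

lemma seqExt_mem (a a' m : ℕ) (f : (j : Finset.Icc a' m) → X j.1) (j : Finset.Icc a m)
    (h : j.1 ∈ Finset.Icc a' m) : seqExt X a a' m f j = f ⟨j.1, h⟩ := by
  simp only [seqExt, LinearMap.pi_apply, dif_pos h, LinearMap.proj_apply]

lemma seqExt_not_mem (a a' m : ℕ) (f : (j : Finset.Icc a' m) → X j.1) (j : Finset.Icc a m)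
    (h : j.1 ∉ Finset.Icc a' m) : seqExt X a a' m f j = 0 := by
  simp only [seqExt, LinearMap.pi_apply, dif_neg h, LinearMap.zero_apply]

lemma seqSum_summand {a a' : ℕ} (h : a ≤ a') (m : ℕ) :
    IsSummand Λ (seqSum Λ X a' m) (seqSum Λ X a m) := by
  refine ⟨seqExt X a a' m, seqRes X h m, LinearMap.ext fun f => funext fun j => ?_⟩
  exact seqExt_mem X a a' m f ⟨j.1, Finset.Icc_subset_Icc_left h j.2⟩ j.2

lemma comp_summand {k m : ℕ} (hk : k ≤ m) : IsSummand Λ (X k) (seqSum Λ X k m) := by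
  let k' : Finset.Icc k m := ⟨k, Finset.mem_Icc.2 ⟨le_rfl, hk⟩⟩
  refine ⟨LinearMap.single Λ (fun j : Finset.Icc k m => X j.1) k',
    (LinearMap.proj k' : ((j : Finset.Icc k m) → X j.1) →ₗ[Λ] X k), LinearMap.ext fun x => ?_⟩
  exact Pi.single_eq_same (M := fun j : Finset.Icc k m => X j.1) k' x

lemma single_add_seqExt {k m : ℕ} (k' : Finset.Icc k m) (hk' : k'.1 = k)
    (f : (j : Finset.Icc k m) → X j.1) :
    Pi.single k' (f k') + seqExt X k (k + 1) m (seqRes X (Nat.le_succ k) m f) = f := by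
  funext j
  rw [Pi.add_apply]
  by_cases hj : j = k'
  · subst hj
    rw [seqExt_not_mem _ _ _ _ _ _ (by simp [hk']), add_zero, Pi.single_eq_same]
  · have hj' : j.1 ∈ Finset.Icc (k + 1) m := by
      have h1 := Finset.mem_Icc.1 j.2
      have h2 : j.1 ≠ k := fun h => hj (Subtype.ext (h.trans hk'.symm))
      exact Finset.mem_Icc.2 ⟨by omega, h1.2⟩
    rw [seqExt_mem _ _ _ _ _ _ hj', Pi.single_eq_of_ne hj, zero_add]
    rfl

lemma seqSum_summand_prod {k m : ℕ} (hk : k ≤ m) :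
    IsSummand Λ (seqSum Λ X k m) (dsum Λ (X k) (seqSum Λ X (k + 1) m)) := by
  let k' : Finset.Icc k m := ⟨k, Finset.mem_Icc.2 ⟨le_rfl, hk⟩⟩
  let T := (j : Finset.Icc (k + 1) m) → X j.1
  let s : X k →ₗ[Λ] ((j : Finset.Icc k m) → X j.1) :=
    LinearMap.single Λ (fun j : Finset.Icc k m => X j.1) k'
  let p : ((j : Finset.Icc k m) → X j.1) →ₗ[Λ] X k := LinearMap.proj k'
  exact ⟨p.prod (seqRes X (Nat.le_succ k) m),
    s ∘ₗ LinearMap.fst Λ (X k) T + seqExt X k (k + 1) m ∘ₗ LinearMap.snd Λ (X k) T,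
    LinearMap.ext fun f => single_add_seqExt X k' rfl f⟩

end Summands

/-! ### Maximal join intervals -/

section Assembly

lemma self_mem_cogen {Z : Mdl Λ} (hZ : Module.Finite Λ Z) : Z ∈ Cogen Λ Z :=
  mem_cogen.2 ⟨hZ, 1, LinearMap.pi fun _ => LinearMap.id, fun _ _ h => congrFun h 0⟩

lemma cogen_trans [IsNoetherianRing Λ] {C : Set (Mdl Λ)} (hC : IsTorf Λ C) {M N : Mdl Λ}
    (hM : M ∈ C) (hN : N ∈ Cogen Λ M) : N ∈ C := by
  obtain ⟨-, n, f, hf⟩ := mem_cogen.1 hN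
  exact torf_sub hC (torf_pi hC hM n) f hf

/-- The interval attached to `Δ_{≥ k}` is a maximal join interval in the one attached to
`Δ_{> k}`. -/
lemma maxJoin (K : Type) [Field K] [Algebra K Λ] [FiniteDimensional K Λ] {m : ℕ}
    {X : ℕ → Mdl Λ} (hΔ : CogenPreordered Λ m X) {k : ℕ} (hk1 : 1 ≤ k) (hkm : k ≤ m) :
    IsMaxJoinIn Λ (modAll Λ)
        (Cogen Λ (seqSum Λ X k m)) (perpTauInv Λ (seqSum Λ X k m))
        (Cogen Λ (seqSum Λ X (k + 1) m)) (perpTauInv Λ (seqSum Λ X (k + 1) m)) ∧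
      FunctFin Λ (Cogen Λ (seqSum Λ X k m)) ∧
      FunctFin Λ (perpTauInv Λ (seqSum Λ X k m)) := by
  have := artinian_of_fd K Λ
  obtain ⟨-, hrig, hcog⟩ := hΔ
  obtain ⟨c1⟩ := exists_copres K _ hrig.1
  have hZr := rigid_summand c1 (seqSum_summand X hk1 m) hrig
  set Z := seqSum Λ X k m with hZdef
  have hS' : IsSummand Λ (seqSum Λ X (k + 1) m) Z := seqSum_summand X (Nat.le_succ k) m
  have hSp := seqSum_summand_prod X hkm
  have hSk : IsSummand Λ (X k) Z := comp_summand X hkm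
  set Z' := seqSum Λ X (k + 1) m with hZ'def
  have hZf := hZr.1
  have hZ'f := finite_summand hS' hZf
  have hXf := finite_summand hSk hZf
  obtain ⟨c⟩ := exists_copres K Z hZf
  obtain ⟨c'⟩ := exists_copres K Z' hZ'f
  obtain ⟨cX⟩ := exists_copres K (X k) hXf
  have hpf : Module.Finite Λ (dsum Λ (X k) Z') := inferInstanceAs (Module.Finite Λ (X k × Z'))
  obtain ⟨cp⟩ := exists_copres K _ hpf
  have hTF : IsTorf Λ (Cogen Λ Z) := isTorf_cogen c hZr
  have hTG : IsTorf Λ (perpTauInv Λ Z) := isTorf_perp c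
  -- Rigidity of `Z` gives `Cogen Z ⊆ (τ⁻¹Z)^⊥`.
  have hFG : Cogen Λ Z ⊆ perpTauInv Λ Z :=
    fun M hM => ⟨hM.1, fun N hN => hZr.2 N (cogen_trans hTF hM hN)⟩
  have hGG' : perpTauInv Λ Z ⊆ perpTauInv Λ Z' := perp_anti c hS'
  refine ⟨⟨hTF, hTG, cogen_mono hS', hFG, hGG', Set.Subset.antisymm ?_ ?_⟩,
    ⟨torf_contraFin hTF, cogen_covFin K hZf⟩, ⟨torf_contraFin hTG, perp_covFin K c ?_⟩⟩
  · rintro M hM H ⟨hH, hFH, hcov⟩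
    exact perp_le_of_covers c hZf hZr hH hFH
      (fun F' hF' hle => hcov F' hF' (hle.trans hGG')) hM
  · refine Set.sInter_subset_of_mem ⟨hTG, hFG, fun F' hF' hle M hM => ?_⟩
    have hTF' : IsTorf Λ F' := hF'.2.1
    refine ⟨torf_fin hTF' hM, fun N hN => ?_⟩
    have hNF' : N ∈ F' := cogen_trans hTF' hM hN
    refine ext1_summand cp hSp (ext1_prod cX c' ?_ (perp_ext1 (hle hNF')))
    refine ext1_of_indec K (X k) hXf fun Y hY hYX => ?_
    have hYZ : IsSummand Λ Y Z := isSummand_trans hYX hSk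
    obtain ⟨cY⟩ := exists_copres K Y (finite_summand hYX hXf)
    obtain ⟨W, D, hdel, ⟨e⟩, hD⟩ := exists_deleted (Y := Y) hZf
    have hsplit : SplitInjIn Λ (Cogen Λ Z) Y := splitInj_of_not_cogen K hY
      (cogen_mono hYZ (self_mem_cogen (finite_summand hYX hXf)))
      (hcog k hk1 hkm Y hY hYX W hdel) e hD
    exact perp_ext1 (covers_le_perp K cY hsplit (hFG.trans (perp_anti c hYZ)) hF' hNF')
  · exact ((mem_perp c Z).1 (hFG (self_mem_cogen hZf))).2

end Assembly

end StmtAux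

open Paper in
/-- Proposition: `φ` is well defined.  For a cogen-preordered basic
`τ⁻¹`-rigid module `Δ = (X 1, …, X m)`, setting `F_j = Cogen Δ_{≥j}` and
`G_j = (τ⁻¹ Δ_{≥j})^⊥`, the sequence `([F_1,G_1], …, [F_m,G_m])` is a decreasing
sequence of functorially finite maximal join intervals in `torf (mod Λ)`
(with the convention that the `(m+1)`-st interval is `[0, mod Λ]`; note that
`Δ_{≥ m+1} = 0`, so `Cogen Δ_{≥m+1} = 0` and `(τ⁻¹ Δ_{≥m+1})^⊥ = mod Λ`). -/
theorem stmt_1 (K Λ : Type) [Field K] [Ring Λ] [Algebra K Λ] [FiniteDimensional K Λ]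
    (hΛbasic : IsBasic Λ (ModuleCat.of Λ Λ))
    (m : ℕ) (X : ℕ → Mdl Λ) (hΔ : CogenPreordered Λ m X) :
    ∀ k, 1 ≤ k → k ≤ m →
      IsMaxJoinIn Λ (modAll Λ)
        (Cogen Λ (seqSum Λ X k m)) (perpTauInv Λ (seqSum Λ X k m))
        (Cogen Λ (seqSum Λ X (k + 1) m)) (perpTauInv Λ (seqSum Λ X (k + 1) m)) ∧
      FunctFin Λ (Cogen Λ (seqSum Λ X k m)) ∧
      FunctFin Λ (perpTauInv Λ (seqSum Λ X k m)) := by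
  exact fun k hk1 hkm => StmtAux.maxJoin K hΔ hk1 hkm
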